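/- arXiv:1610.07945 — 7 statements merged into one kernel-verified Lean document; each statement's English description precedes it below -/
import Mathlib

section
/- The Hurwitz zeta function σ ↦ ζ(σ, a) with 0 < a ≤ 1 has a real zero in the open interval (0, 1) if and only if 0 < a < 1/2. -/
open HurwitzZeta Set

namespace HZAux

open Complex Filter Topology

/-- Midpoint-rule error term. -/
noncomputable def G (m : ℝ) (s : ℂ) : ℂ :=
  (m : ℂ) ^ (-s) - (((m + 1 / 2 : ℝ) : ℂ) ^ (1 - s) - ((m - 1 / 2 : ℝ) : ℂ) ^ (1 - s)) / (1 - s)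

lemma hasDerivAt_cpow_real (x : ℝ) (s : ℂ) (hx : 0 < x) :
    HasDerivAt (fun y : ℝ => (y : ℂ) ^ s) (s * (x : ℂ) ^ (s - 1)) x := by
  have := ((hasDerivAt_id (x : ℂ)).cpow_const (c := s) (Or.inl (by simpa))).comp_ofReal
  simpa using this

lemma G_bound (m : ℝ) (hm : 1 / 2 < m) (s : ℂ) (hs : s ≠ 1) (K : ℝ)
    (hK : ∀ x ∈ Icc (m - 1 / 2) (m + 1 / 2), ‖s * (s + 1) * (x : ℂ) ^ (-s - 2)‖ ≤ K) :
    ‖G m s‖ ≤ K := by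
  set I := Icc (m - 1 / 2) (m + 1 / 2) with hI
  have hpos : ∀ x ∈ I, 0 < x := fun x hx => by have := hx.1; linarith
  have hmI : m ∈ I := ⟨by linarith, by linarith⟩
  have hconv : Convex ℝ I := convex_Icc _ _
  have hs1 : (1 : ℂ) - s ≠ 0 := sub_ne_zero.mpr hs.symm
  have hK0 : 0 ≤ K := (norm_nonneg _).trans (hK m hmI)
  have hdist : ∀ x ∈ I, ‖x - m‖ ≤ 1 := fun x hx => by
    rw [Real.norm_eq_abs, abs_le]; constructor <;> linarith [hx.1, hx.2]
  -- first step
  have h1 : ∀ x ∈ I, ‖-s * (x : ℂ) ^ (-s - 1) - -s * (m : ℂ) ^ (-s - 1)‖ ≤ K := by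
    intro x hx
    have := hconv.norm_image_sub_le_of_norm_hasDerivWithin_le (𝕜 := ℝ)
      (f := fun x : ℝ => -s * (x : ℂ) ^ (-s - 1))
      (f' := fun x : ℝ => s * (s + 1) * (x : ℂ) ^ (-s - 2)) (C := K)
      (fun y hy => by
        have := ((hasDerivAt_cpow_real y (-s - 1) (hpos y hy)).const_mul (-s)).hasDerivWithinAt
          (s := I)
        convert this using 1
        rw [show -s - 1 - 1 = -s - 2 by ring]; ring) hK hmI hx
    exact this.trans (mul_le_of_le_one_right hK0 (hdist x hx))
  have hlin : ∀ y : ℝ, HasDerivAt (fun x : ℝ => ((x : ℂ) - m)) 1 y := fun y =>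
    ((hasDerivAt_id (y : ℂ)).sub_const (m : ℂ)).comp_ofReal
  have h2 : ∀ x ∈ I, ‖((x : ℂ) ^ (-s) - -s * (m : ℂ) ^ (-s - 1) * (x - m)) - (m : ℂ) ^ (-s)‖ ≤ K := by
    intro x hx
    have := hconv.norm_image_sub_le_of_norm_hasDerivWithin_le (𝕜 := ℝ)
      (f := fun x : ℝ => (x : ℂ) ^ (-s) - -s * (m : ℂ) ^ (-s - 1) * (x - m))
      (f' := fun x : ℝ => -s * (x : ℂ) ^ (-s - 1) - -s * (m : ℂ) ^ (-s - 1)) (C := K)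
      (fun y hy => by
        have := ((hasDerivAt_cpow_real y (-s) (hpos y hy)).sub
          ((hlin y).const_mul (-s * (m : ℂ) ^ (-s - 1)))).hasDerivWithinAt (s := I)
        exact HasDerivWithinAt.congr_deriv this (by ring)) h1 hmI hx
    simp only [sub_self, mul_zero, sub_zero] at this
    exact this.trans (mul_le_of_le_one_right hK0 (hdist x hx))
  have h3 := hconv.norm_image_sub_le_of_norm_hasDerivWithin_le (𝕜 := ℝ)
      (f := fun x : ℝ => (x : ℂ) ^ (1 - s) / (1 - s) - -s * (m : ℂ) ^ (-s - 1) * ((x - m) ^ 2 / 2)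
        - (m : ℂ) ^ (-s) * (x - m))
      (f' := fun x : ℝ => ((x : ℂ) ^ (-s) - -s * (m : ℂ) ^ (-s - 1) * (x - m)) - (m : ℂ) ^ (-s))
      (C := K)
      (fun y hy => by
        have := ((((hasDerivAt_cpow_real y (1 - s) (hpos y hy)).div_const (1 - s)).sub
          ((((hlin y).pow 2).div_const 2).const_mul (-s * (m : ℂ) ^ (-s - 1)))).sub
          ((hlin y).const_mul ((m : ℂ) ^ (-s)))).hasDerivWithinAt (s := I)
        refine HasDerivWithinAt.congr_deriv this ?_
        rw [show 1 - s - 1 = -s by ring, mul_div_cancel_left₀ _ hs1]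
        norm_num) h2 (x := m - 1 / 2) (y := m + 1 / 2) ⟨by linarith, by linarith⟩
        ⟨by linarith, by linarith⟩
  have e : (m + 1 / 2 : ℝ) - (m - 1 / 2) = 1 := by ring
  rw [e, norm_one, mul_one, ← norm_neg] at h3
  refine le_of_eq_of_le (congrArg norm ?_) h3
  unfold G
  push_cast
  ring

/-- The region. -/
def V : Set ℂ := {s | -1 < s.re} \ {1}

lemma isOpen_V : IsOpen V :=
  (isOpen_lt continuous_const continuous_re).sdiff isClosed_singleton

lemma G_bound' (a : ℝ) (ha : 0 < a) (R δ : ℝ) (hδ : 0 < δ) (n : ℕ) (s : ℂ) (hs : s ≠ 1)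
    (hR : ‖s‖ ≤ R) (hre : -1 + δ ≤ s.re) :
    ‖G (n + 1 + a) s‖ ≤ R * (R + 1) * 2 ^ (R + 2) * (1 / |(n : ℝ) + 1| ^ (1 + δ)) := by
  have hn : (0 : ℝ) ≤ n := n.cast_nonneg
  have hR0 : 0 ≤ R := (norm_nonneg _).trans hR
  apply G_bound _ (by linarith) s hs
  intro x hx
  have hx1 : ((n : ℝ) + 1) / 2 ≤ x := by linarith [hx.1]
  have hx0 : 0 < x := by linarith
  have hsr : s.re ≤ R := (re_le_norm s).trans hR
  rw [norm_mul, norm_mul, norm_cpow_eq_rpow_re_of_pos hx0]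
  have hA : ‖s‖ * ‖s + 1‖ ≤ R * (R + 1) := by
    have : ‖s + 1‖ ≤ R + 1 := (norm_add_le _ _).trans (by simpa using hR)
    gcongr
  have hB : x ^ (-s - 2).re ≤ 2 ^ (R + 2) * (1 / |(n : ℝ) + 1| ^ (1 + δ)) := by
    rw [abs_of_pos (by linarith)]
    have e1 : (-s - 2).re = -(s.re + 2) := by simp; ring
    rw [e1]
    calc x ^ (-(s.re + 2)) ≤ (((n : ℝ) + 1) / 2) ^ (-(s.re + 2)) :=
          Real.rpow_le_rpow_of_nonpos (by linarith) hx1 (by linarith)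
      _ = 2 ^ (s.re + 2) * (1 / ((n : ℝ) + 1) ^ (s.re + 2)) := by
          rw [Real.rpow_neg (by linarith), Real.div_rpow (by linarith) (by norm_num)]
          simp [div_eq_mul_inv]
      _ ≤ _ := by
          have k1 : (2 : ℝ) ^ (s.re + 2) ≤ 2 ^ (R + 2) :=
            Real.rpow_le_rpow_of_exponent_le (by norm_num) (by linarith)
          have k2 : ((n : ℝ) + 1) ^ (1 + δ) ≤ ((n : ℝ) + 1) ^ (s.re + 2) :=
            Real.rpow_le_rpow_of_exponent_le (by linarith) (by linarith)
          gcongr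
  rw [mul_assoc (R * (R + 1))]
  exact mul_le_mul hA hB (Real.rpow_nonneg hx0.le _) (by positivity)

lemma summable_u (R δ : ℝ) (hδ : 0 < δ) :
    Summable fun n : ℕ => R * (R + 1) * 2 ^ (R + 2) * (1 / |(n : ℝ) + 1| ^ (1 + δ)) :=
  ((Real.summable_one_div_nat_add_rpow 1 (1 + δ)).mpr (by linarith)).mul_left _

lemma summable_G (a : ℝ) (ha : 0 < a) (s : ℂ) (hs : s ∈ V) :
    Summable fun n : ℕ => G (n + 1 + a) s := by
  have h1 : -1 < s.re := hs.1
  have h2 : s ≠ 1 := hs.2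
  exact Summable.of_norm_bounded (summable_u ‖s‖ (s.re + 1) (by linarith)) fun n =>
    G_bound' a ha _ _ (by linarith) n s h2 le_rfl (by linarith)

lemma differentiableAt_G (m : ℝ) (hm : 1 / 2 < m) (s : ℂ) (hs : s ≠ 1) :
    DifferentiableAt ℂ (G m) s := by
  unfold G
  have h (x : ℝ) (hx : 0 < x) : (x : ℂ) ≠ 0 := by exact_mod_cast hx.ne'
  refine DifferentiableAt.sub ?_ (DifferentiableAt.div (DifferentiableAt.sub ?_ ?_) (by fun_prop)
    (sub_ne_zero.mpr hs.symm))
  · exact (differentiableAt_id.neg).const_cpow (Or.inl (h _ (by linarith)))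
  · exact ((differentiableAt_const 1).sub differentiableAt_id).const_cpow
      (Or.inl (h _ (by linarith)))
  · exact ((differentiableAt_const 1).sub differentiableAt_id).const_cpow
      (Or.inl (h _ (by linarith)))

lemma differentiableOn_tsum_G (a : ℝ) (ha : 0 < a) :
    DifferentiableOn ℂ (fun s => ∑' n : ℕ, G (n + 1 + a) s) V := by
  intro s hs
  have h1 : -1 < s.re := hs.1
  set δ := (s.re + 1) / 2 with hδ
  set R := ‖s‖ + 1
  set W : Set ℂ := ({z | -1 + δ < z.re} ∩ Metric.ball 0 R) \ {1}
  have hW : IsOpen W := ((isOpen_lt continuous_const continuous_re).inter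
    Metric.isOpen_ball).sdiff isClosed_singleton
  have hsW : s ∈ W := ⟨⟨by simp only [mem_ofPred_eq]; linarith, by simp [R]⟩, hs.2⟩
  have := differentiableOn_tsum_of_summable_norm (F := fun (n : ℕ) s => G (n + 1 + a) s)
    (summable_u R δ (by linarith)) (U := W)
    (fun n z hz => (differentiableAt_G _
      (by have : (0 : ℝ) ≤ n := n.cast_nonneg
          linarith) z hz.2).differentiableWithinAt) hW
    (fun n z hz => G_bound' a ha R δ (by linarith) n z hz.2
      (by simpa using (mem_ball_zero_iff.mp hz.1.2).le) (le_of_lt hz.1.1))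
  exact (this.differentiableAt (hW.mem_nhds hsW)).differentiableWithinAt

/-- Formula. -/
noncomputable def F (a : ℝ) (s : ℂ) : ℂ :=
  (a : ℂ) ^ (-s) - ((a + 1 / 2 : ℝ) : ℂ) ^ (1 - s) / (1 - s) + ∑' n : ℕ, G (n + 1 + a) s

lemma differentiableOn_F (a : ℝ) (ha : 0 < a) : DifferentiableOn ℂ (F a) V := by
  unfold F
  refine DifferentiableOn.add ?_ (differentiableOn_tsum_G a ha)
  intro s hs
  have h (x : ℝ) (hx : 0 < x) : (x : ℂ) ≠ 0 := by exact_mod_cast hx.ne'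
  refine DifferentiableAt.differentiableWithinAt (DifferentiableAt.sub ?_
    (DifferentiableAt.div ?_ (by fun_prop) (sub_ne_zero.mpr (Ne.symm hs.2))))
  · exact (differentiableAt_id.neg).const_cpow (Or.inl (h _ (by linarith)))
  · exact ((differentiableAt_const 1).sub differentiableAt_id).const_cpow
      (Or.inl (h _ (by linarith)))

lemma F_eq_of_one_lt (a : ℝ) (ha : 0 < a) (ha' : a ≤ 1) (s : ℂ) (hs : 1 < s.re) :
    hurwitzZeta (a : UnitAddCircle) s = F a s := by
  have hs1 : s ≠ 1 := by rintro rfl; simp at hs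
  have hV : s ∈ V := ⟨by simp only [mem_ofPred_eq]; linarith, hs1⟩
  have hz := (hasSum_nat_add_iff' 1).mpr (hasSum_hurwitzZeta_of_one_lt_re ⟨ha.le, ha'⟩ hs)
  have ht := hz.tendsto_sum_nat
  have hG := (summable_G a ha s hV).hasSum.tendsto_sum_nat
  set f : ℕ → ℂ := fun n => ((n + a + 1 / 2 : ℝ) : ℂ) ^ (1 - s) / (1 - s) with hf
  have hsum : ∀ N, ∑ n ∈ Finset.range N, G (n + 1 + a) s =
      ∑ n ∈ Finset.range N, 1 / (((n + 1 : ℕ) : ℂ) + a) ^ s - (f N - f 0) := by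
    intro N
    rw [← Finset.sum_range_sub, ← Finset.sum_sub_distrib]
    refine Finset.sum_congr rfl fun n _ => ?_
    unfold G
    simp only [hf]
    rw [cpow_neg, one_div, sub_div]
    push_cast
    congr 4 <;> ring_nf
  have hf0 : Tendsto f atTop (𝓝 0) := by
    rw [tendsto_zero_iff_norm_tendsto_zero]
    have h1 : Tendsto (fun n : ℕ => (n : ℝ) + (a + 1 / 2)) atTop atTop :=
      tendsto_atTop_add_const_right _ _ tendsto_natCast_atTop_atTop
    have h2 := ((tendsto_rpow_neg_atTop (y := s.re - 1) (by linarith)).comp h1).div_const ‖1 - s‖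
    rw [zero_div] at h2
    refine h2.congr fun n => ?_
    have hn : (0 : ℝ) ≤ n := n.cast_nonneg
    simp only [hf, Function.comp]
    rw [norm_div, norm_cpow_eq_rpow_re_of_pos (by linarith)]
    congr 2
    · ring
    · simp
  have hlim := ht.sub (hf0.sub_const (f 0))
  have := tendsto_nhds_unique hG (hlim.congr fun N => (hsum N).symm)
  unfold F
  rw [this]
  simp only [hf, Finset.sum_range_one, cpow_neg]
  push_cast
  simp

lemma F_eq (a : ℝ) (ha : 0 < a) (ha' : a ≤ 1) (σ : ℝ) (h1 : -1 < σ) (h2 : σ < 1) :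
    hurwitzZeta (a : UnitAddCircle) (σ : ℂ) = F a σ := by
  set A : Set ℂ := {s | 1 < s.re}
  set B : Set ℂ := {s | -1 < s.re} ∩ {s | 0 < s.im}
  set C : Set ℂ := {s | -1 < s.re} ∩ {s | s.re < 1}
  have hAo : IsOpen A := isOpen_lt continuous_const continuous_re
  have hBo : IsOpen B := (isOpen_lt continuous_const continuous_re).inter
    (isOpen_lt continuous_const continuous_im)
  have hCo : IsOpen C := (isOpen_lt continuous_const continuous_re).inter
    (isOpen_lt continuous_re continuous_const)
  have hA : IsPreconnected A := (convex_halfSpace_re_gt 1).isPreconnected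
  have hB : IsPreconnected B :=
    ((convex_halfSpace_re_gt (-1)).inter (convex_halfSpace_im_gt 0)).isPreconnected
  have hC : IsPreconnected C :=
    ((convex_halfSpace_re_gt (-1)).inter (convex_halfSpace_re_lt 1)).isPreconnected
  have hU : IsPreconnected (A ∪ B ∪ C) := by
    refine IsPreconnected.union I (Or.inr ⟨?_, ?_⟩) ⟨?_, ?_⟩
      (IsPreconnected.union (2 + I) ?_ ⟨?_, ?_⟩ hA hB) hC <;> simp [A]
    norm_num
  have hUo : IsOpen (A ∪ B ∪ C) := (hAo.union hBo).union hCo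
  have hUV : A ∪ B ∪ C ⊆ V := by
    rintro s ((h | h) | h)
    · have h : 1 < s.re := h
      refine ⟨by simp only [mem_ofPred_eq]; linarith, ?_⟩
      rintro rfl
      simp at h
    · refine ⟨h.1, ?_⟩
      rintro rfl
      simpa using h.2
    · refine ⟨h.1, ?_⟩
      rintro rfl
      simpa using h.2
  have key := AnalyticOnNhd.eqOn_of_preconnected_of_eventuallyEq
    (f := hurwitzZeta (a : UnitAddCircle)) (g := F a) (U := A ∪ B ∪ C) (z₀ := 2)
    (DifferentiableOn.analyticOnNhd (fun s hs => (differentiableAt_hurwitzZeta _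
      (hUV hs).2).differentiableWithinAt) hUo)
    (((differentiableOn_F a ha).mono hUV).analyticOnNhd hUo) hU
    (Or.inl (Or.inl (by simp [A])))
    (by
      filter_upwards [hAo.mem_nhds (show (2 : ℂ) ∈ A by simp [A])] with s hs
      exact F_eq_of_one_lt a ha ha' s hs)
  exact key (Or.inr ⟨by simpa using h1, by simpa using h2⟩)

/-- real error term -/
noncomputable def g (m σ : ℝ) : ℝ :=
  m ^ (-σ) - ((m + 1 / 2) ^ (1 - σ) - (m - 1 / 2) ^ (1 - σ)) / (1 - σ)

lemma G_ofReal (m σ : ℝ) (hm : 1 / 2 < m) : G m σ = (g m σ : ℂ) := by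
  unfold G g
  push_cast
  rw [ofReal_cpow (by linarith), ofReal_cpow (by linarith), ofReal_cpow (by linarith)]
  push_cast
  rfl

lemma F_ofReal (a σ : ℝ) (ha : 0 < a) : F a σ =
    ((a ^ (-σ) - (a + 1 / 2) ^ (1 - σ) / (1 - σ) + ∑' n : ℕ, g (n + 1 + a) σ : ℝ) : ℂ) := by
  unfold F
  have : ∀ n : ℕ, G (n + 1 + a) σ = (g (n + 1 + a) σ : ℂ) := fun n =>
    G_ofReal _ _ (by
      have : (0 : ℝ) ≤ n := n.cast_nonneg
      linarith)
  simp_rw [this]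
  push_cast
  rw [ofReal_cpow (by linarith), ofReal_cpow (by linarith)]
  push_cast
  rfl

lemma g_nonpos (m σ : ℝ) (hm : 1 / 2 < m) (h0 : 0 < σ) (h1 : σ < 1) : g m σ ≤ 0 := by
  have hm0 : 0 < m := by linarith
  have tang : ∀ x : ℝ, 0 < x → m ^ (-σ) - σ * m ^ (-σ - 1) * (x - m) ≤ x ^ (-σ) := by
    intro x hx
    have hxm : 0 < x / m := by positivity
    have e1 : 1 - σ * (x / m - 1) ≤ (x / m) ^ (-σ) := by
      rw [Real.rpow_def_of_pos hxm]
      have := Real.add_one_le_exp (Real.log (x / m) * -σ)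
      have := Real.log_le_sub_one_of_pos hxm
      nlinarith
    have e2 : x ^ (-σ) = m ^ (-σ) * (x / m) ^ (-σ) := by
      rw [← Real.mul_rpow hm0.le hxm.le]
      congr 1
      field_simp
    rw [e2, Real.rpow_sub_one hm0.ne']
    have hp : 0 < m ^ (-σ) := Real.rpow_pos_of_pos hm0 _
    calc _ = m ^ (-σ) * (1 - σ * (x / m - 1)) := by field_simp
      _ ≤ _ := by gcongr
  set r : ℝ → ℝ := fun x => x ^ (1 - σ) / (1 - σ) - m ^ (-σ) * (x - m)
    + σ * m ^ (-σ - 1) * ((x - m) ^ 2 / 2) with hr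
  have hd : ∀ x : ℝ, 0 < x → HasDerivAt r
      (x ^ (-σ) - m ^ (-σ) + σ * m ^ (-σ - 1) * (x - m)) x := by
    intro x hx
    have hl : HasDerivAt (fun x : ℝ => x - m) 1 x := (hasDerivAt_id x).sub_const m
    have := (((Real.hasDerivAt_rpow_const (p := 1 - σ) (Or.inl hx.ne')).div_const (1 - σ)).sub
      (hl.const_mul (m ^ (-σ)))).add (((hl.pow 2).div_const 2).const_mul (σ * m ^ (-σ - 1)))
    refine HasDerivAt.congr_deriv this ?_
    have h1σ : 1 - σ ≠ 0 := by linarith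
    rw [show 1 - σ - 1 = -σ by ring, mul_div_cancel_left₀ _ h1σ]
    norm_num
  have hmono : MonotoneOn r (Icc (m - 1 / 2) (m + 1 / 2)) := by
    have hpos : ∀ x ∈ Icc (m - 1 / 2) (m + 1 / 2), 0 < x := fun x hx => by linarith [hx.1]
    refine monotoneOn_of_deriv_nonneg (convex_Icc _ _)
      (fun x hx => (hd x (hpos x hx)).continuousAt.continuousWithinAt)
      (fun x hx => (hd x (hpos x (interior_subset hx))).differentiableAt.differentiableWithinAt)
      (fun x hx => ?_)
    have hx0 := hpos x (interior_subset hx)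
    rw [(hd x hx0).deriv]
    linarith [tang x hx0]
  have := hmono (a := m - 1 / 2) (b := m + 1 / 2) ⟨by linarith, by linarith⟩
    ⟨by linarith, by linarith⟩ (by linarith)
  simp only [hr] at this
  unfold g
  rw [sub_div]
  nlinarith

lemma first_neg (a σ : ℝ) (ha : 1 / 2 ≤ a) (h0 : 0 < σ) (h1 : σ < 1) :
    a ^ (-σ) - (a + 1 / 2) ^ (1 - σ) / (1 - σ) < 0 := by
  have e1 : a ^ (-σ) ≤ 2 ^ σ := by
    calc a ^ (-σ) ≤ (1 / 2) ^ (-σ) :=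
          Real.rpow_le_rpow_of_nonpos (by norm_num) ha (by linarith)
      _ = 2 ^ σ := by
          rw [Real.rpow_neg (by norm_num), ← Real.inv_rpow (by norm_num)]; norm_num
  have e2 : 1 ≤ (a + 1 / 2) ^ (1 - σ) := Real.one_le_rpow (by linarith) (by linarith)
  have e3 : (2 : ℝ) ^ σ * (1 - σ) < 1 := by
    have h : 1 - σ < (2 : ℝ) ^ (-σ) := by
      rw [Real.rpow_def_of_pos (by norm_num)]
      have := Real.add_one_le_exp (Real.log 2 * -σ)
      have := Real.log_two_lt_d9
      nlinarith
    calc (2 : ℝ) ^ σ * (1 - σ) < 2 ^ σ * 2 ^ (-σ) := by gcongr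
      _ = 1 := by rw [← Real.rpow_add (by norm_num)]; simp
  have e4 : (2 : ℝ) ^ σ < 1 / (1 - σ) := by rwa [lt_div_iff₀ (by linarith)]
  have e5 : 1 / (1 - σ) ≤ (a + 1 / 2) ^ (1 - σ) / (1 - σ) := by
    have : 0 < 1 - σ := by linarith
    gcongr
  linarith

lemma value_zero (a : ℝ) (ha : 0 < a) (ha' : a ≤ 1) :
    hurwitzZeta (a : UnitAddCircle) ((0 : ℝ) : ℂ) = ((1 / 2 - a : ℝ) : ℂ) := by
  rw [F_eq a ha ha' 0 (by norm_num) (by norm_num), F_ofReal a 0 ha]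
  congr 1
  have : ∀ m : ℝ, g m 0 = 0 := fun m => by simp [g]; ring
  simp [this]
  ring

end HZAux

/-- The Hurwitz zeta function `σ ↦ ζ(σ, a)` with `0 < a ≤ 1` has a real zero in `(0, 1)`
iff `0 < a < 1/2`. -/
theorem hurwitzZeta_has_real_zero_in_Ioo_zero_one_iff (a : ℝ) (ha : 0 < a) (ha' : a ≤ 1) :
    (∃ σ : ℝ, σ ∈ Set.Ioo (0 : ℝ) 1 ∧ hurwitzZeta (a : UnitAddCircle) (σ : ℂ) = 0) ↔
      0 < a ∧ a < 1 / 2 := by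
  constructor
  · rintro ⟨σ, ⟨h0, h1⟩, hz⟩
    refine ⟨ha, ?_⟩
    by_contra! hcon
    rw [HZAux.F_eq a ha ha' σ (by linarith) h1, HZAux.F_ofReal a σ ha] at hz
    have hz' := Complex.ofReal_eq_zero.mp hz
    have h2 := HZAux.first_neg a σ hcon h0 h1
    have h3 : ∑' n : ℕ, HZAux.g (n + 1 + a) σ ≤ 0 := tsum_nonpos fun n =>
      HZAux.g_nonpos _ σ (by
        have : (0 : ℝ) ≤ n := n.cast_nonneg
        linarith) h0 h1
    linarith
  · rintro ⟨-, hlt⟩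
    set f : ℝ → ℝ := fun σ => (hurwitzZeta (a : UnitAddCircle) (σ : ℂ)).re with hf
    have hreal : ∀ σ : ℝ, -1 < σ → σ < 1 → hurwitzZeta (a : UnitAddCircle) (σ : ℂ) = (f σ : ℂ) := by
      intro σ h0 h1
      simp only [hf]
      rw [HZAux.F_eq a ha ha' σ h0 h1, HZAux.F_ofReal a σ ha, Complex.ofReal_re]
    have hcont : ∀ σ : ℝ, σ < 1 → ContinuousAt f σ := by
      intro σ h1
      have hne : (σ : ℂ) ≠ 1 := by exact_mod_cast h1.ne
      exact Complex.continuous_re.continuousAt.comp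
        ((differentiableAt_hurwitzZeta _ hne).continuousAt.comp
          (f := fun x : ℝ => (x : ℂ)) Complex.continuous_ofReal.continuousAt)
    have hf0 : 0 < f 0 := by
      simp only [hf]
      rw [HZAux.value_zero a ha ha', Complex.ofReal_re]
      linarith
    obtain ⟨τ, hτ0, hτ1, hτ⟩ : ∃ τ : ℝ, 0 < τ ∧ τ < 1 ∧ f τ < 0 := by
      have hres := hurwitzZeta_residue_one (a : UnitAddCircle)
      have hmap : Filter.Tendsto (fun x : ℝ => (x : ℂ)) (nhdsWithin 1 (Iio 1))
          (nhdsWithin 1 {1}ᶜ) := by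
        refine tendsto_nhdsWithin_iff.mpr ⟨?_, ?_⟩
        · exact (Complex.continuous_ofReal.tendsto' 1 1 (by simp)).mono_left nhdsWithin_le_nhds
        · filter_upwards [self_mem_nhdsWithin] with x hx
          have : x ≠ 1 := ne_of_lt hx
          simpa using this
      have hre := (Complex.continuous_re.tendsto 1).comp (hres.comp hmap)
      have hev := hre.eventually (lt_mem_nhds (show (0 : ℝ) < (1 : ℂ).re by simp))
      have hI : Ioo (0 : ℝ) 1 ∈ nhdsWithin 1 (Iio 1) := Ioo_mem_nhdsLT (by norm_num)
      obtain ⟨τ, hτ, hτI⟩ := (hev.and hI).exists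
      refine ⟨τ, hτI.1, hτI.2, ?_⟩
      simp only [Function.comp] at hτ
      rw [hreal τ (by linarith [hτI.1]) hτI.2] at hτ
      have : (0 : ℝ) < (τ - 1) * f τ := by
        have e : ((τ : ℂ) - 1) * (f τ : ℂ) = (((τ - 1) * f τ : ℝ) : ℂ) := by push_cast; rfl
        rwa [e, Complex.ofReal_re] at hτ
      nlinarith [hτI.2]
    obtain ⟨c, hc, hfc⟩ := intermediate_value_Icc' hτ0.le (f := f)
      (fun x hx => (hcont x (lt_of_le_of_lt hx.2 hτ1)).continuousWithinAt) ⟨hτ.le, hf0.le⟩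
    have hc0 : c ≠ 0 := by
      rintro rfl
      exact hf0.ne' hfc
    have hc1 : c < 1 := lt_of_le_of_lt hc.2 hτ1
    refine ⟨c, ⟨lt_of_le_of_ne hc.1 hc0.symm, hc1⟩, ?_⟩
    rw [hreal c (by linarith [hc.1]) hc1, hfc, Complex.ofReal_zero]
end

section
/- Let b₂⁻ = (3 − √3)/6 and b₂⁺ = (3 + √3)/6. The Hurwitz zeta function σ ↦ ζ(σ, a) with 0 < a ≤ 1 has a real zero in the open interval (-1, 0) if and only if 0 < a < b₂⁻ or 1/2 < a < b₂⁺. -/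
open HurwitzZeta Set

namespace HZ
open Complex MeasureTheory Filter Topology Asymptotics

/-- The generating kernel. -/
noncomputable def F (a t : ℝ) : ℝ := Real.exp (-a * t) / (1 - Real.exp (-t))

/-- The kernel with its first two asymptotic terms at zero removed. -/
noncomputable def K (a t : ℝ) : ℝ := F a t - t⁻¹ - (1 / 2 - a)

/-- The numerator. -/
noncomputable def N (c t : ℝ) : ℝ :=
  t * Real.exp (c * t) - (Real.exp t - 1) - (c - 1 / 2) * (t * (Real.exp t - 1))

lemma K_eq (a t : ℝ) (ht : 0 < t) : K a t = N (1 - a) t / (t * (Real.exp t - 1)) := by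
  have h1 : 0 < Real.exp t - 1 := by have := Real.add_one_lt_exp ht.ne'; linarith
  have h2 : Real.exp (-t) = (Real.exp t)⁻¹ := Real.exp_neg t
  have h3 : Real.exp (-a * t) = Real.exp ((1 - a) * t) * (Real.exp t)⁻¹ := by
    rw [← Real.exp_neg, ← Real.exp_add]; ring_nf
  have h4 := (Real.exp_pos t).ne'
  have h5 : 1 - (Real.exp t)⁻¹ = (Real.exp t - 1) / Real.exp t := by field_simp
  unfold K F N
  rw [h3, h2, h5]
  have := h1.ne'
  field_simp
  ring

lemma N_hasSum (c t : ℝ) :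
    HasSum (fun k : ℕ => (c ^ (k + 2) - 1 / (k + 3 : ℝ) - (c - 1 / 2)) *
      (t ^ (k + 3) / (k + 2).factorial)) (N c t) := by
  have e (x : ℝ) : HasSum (fun n : ℕ => x ^ n / n.factorial) (Real.exp x) := by
    rw [Real.exp_eq_exp_ℝ]; exact NormedSpace.expSeries_div_hasSum_exp x
  have h1 := (e (c * t)).mul_left t
  have h2 := (hasSum_nat_add_iff' 1).2 (e t)
  have h3 := ((e t).mul_left t).mul_left (c - 1 / 2)
  have h := (h1.sub h2).sub h3
  have h' := (hasSum_nat_add_iff' 2).2 h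
  convert! h' using 1
  · ext k
    have : ((k + 2).factorial : ℝ) ≠ 0 := by positivity
    have h8 : ((k + 2 + 1).factorial : ℝ) = (k + 3) * (k + 2).factorial := by
      rw [Nat.factorial_succ]; push_cast; ring
    have : (k + 3 : ℝ) ≠ 0 := by positivity
    rw [h8]
    field_simp
    ring
  · simp [N, Finset.sum_range_succ]; ring

lemma coef_neg (c : ℝ) (h0 : 1 / 2 ≤ c) (h1 : c ^ 2 - c + 1 / 6 ≤ 0) (k : ℕ) :
    c ^ (k + 2) - 1 / (k + 3 : ℝ) - (c - 1 / 2) ≤ 0 := by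
  have h2 : c ≤ 4 / 5 := by nlinarith
  rcases Nat.eq_zero_or_pos k with rfl | hk
  · norm_num; linarith
  set l : ℝ := (c - 1 / 2) / (3 / 10) with hl
  have l0 : 0 ≤ l := div_nonneg (by linarith) (by norm_num)
  have l1 : 0 ≤ 1 - l := by rw [hl]; linarith
  have hcl : c = (1 - l) * (1 / 2) + l * (4 / 5) := by rw [hl]; ring
  have hconv := (convexOn_pow (𝕜 := ℝ) (k + 2)).2 (x := 1 / 2) (y := 4 / 5) (by simp)
    (by norm_num) l1 l0 (by ring)
  simp only [smul_eq_mul, ← hcl] at hconv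
  have hk3 : (0 : ℝ) < k + 3 := by positivity
  have b1 : (1 / 2 : ℝ) ^ (k + 2) ≤ 1 / (k + 3 : ℝ) := by
    rw [one_div_pow]
    apply one_div_le_one_div_of_le hk3
    have : k + 3 ≤ 2 ^ (k + 2) := Nat.lt_two_pow_self (n := k + 2)
    exact_mod_cast this
  have b2 : (4 / 5 : ℝ) ^ (k + 2) ≤ 1 / (k + 3 : ℝ) + 3 / 10 := by
    have h3 : 0 < 1 / (k + 3 : ℝ) := by positivity
    rcases le_or_gt k 3 with h | h
    · interval_cases k <;> norm_num
    · have : (4 / 5 : ℝ) ^ (k + 2) ≤ (4 / 5 : ℝ) ^ 6 :=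
        pow_le_pow_of_le_one (by norm_num) (by norm_num) (by omega)
      norm_num at this
      linarith
  have := mul_le_mul_of_nonneg_left b1 l1
  have := mul_le_mul_of_nonneg_left b2 l0
  linarith

lemma N_neg (c t : ℝ) (ht : 0 < t) (h0 : 1 / 2 ≤ c) (h1 : c ^ 2 - c + 1 / 6 ≤ 0) : N c t < 0 := by
  have h := N_hasSum c t
  rw [← neg_pos]
  refine h.neg.tsum_eq ▸ h.neg.summable.tsum_pos (fun k => ?_) 1 ?_
  · have := coef_neg c h0 h1 k
    have : 0 ≤ t ^ (k + 3) / ((k + 2).factorial : ℝ) := by positivity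
    nlinarith
  · have h8 : 0 < t ^ (1 + 3) / ((1 + 2).factorial : ℝ) := by positivity
    have : c ^ (1 + 2) - 1 / ((1 : ℕ) + 3 : ℝ) - (c - 1 / 2) < 0 := by
      norm_num
      nlinarith
    nlinarith

lemma N_pos (c t : ℝ) (ht : 0 < t) (h0 : c < 1 / 4) (h00 : 0 ≤ c) (h1 : 0 ≤ c ^ 2 - c + 1 / 6) :
    0 < N c t := by
  have h := N_hasSum c t
  have key (k : ℕ) (hk : k ≠ 0) : 0 < c ^ (k + 2) - 1 / (k + 3 : ℝ) - (c - 1 / 2) := by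
    have : 0 ≤ c ^ (k + 2) := by positivity
    have : 1 / (k + 3 : ℝ) ≤ 1 / 4 := by
      have : (1 : ℝ) ≤ k := by exact_mod_cast Nat.one_le_iff_ne_zero.2 hk
      apply one_div_le_one_div_of_le <;> linarith
    linarith
  refine h.tsum_eq ▸ h.summable.tsum_pos (fun k => ?_) 1 ?_
  · apply mul_nonneg _ (by positivity)
    rcases eq_or_ne k 0 with rfl | hk
    · norm_num; linarith
    · exact (key k hk).le
  · exact mul_pos (key 1 one_ne_zero) (by positivity)

lemma N_bound (c t : ℝ) (ht : 0 < t) (ht1 : t ≤ 1) (h0 : 0 ≤ c) (h1 : c ≤ 1) :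
    |N c t| ≤ 3 * t ^ 3 := by
  have a1 := Real.abs_exp_sub_one_sub_id_le (x := t) (by rw [abs_of_pos ht]; exact ht1)
  have hct : 0 ≤ c * t := by positivity
  have hct' : c * t ≤ t := by nlinarith
  have a2 := Real.abs_exp_sub_one_sub_id_le (x := c * t) (by rw [abs_of_nonneg hct]; linarith)
  have a3 := Real.exp_bound (x := t) (by rw [abs_of_pos ht]; exact ht1) (n := 3) (by norm_num)
  rw [abs_of_pos ht] at a3
  simp [Finset.sum_range_succ, Nat.factorial] at a3
  have a2' : |Real.exp (c * t) - 1 - c * t| ≤ t ^ 2 := a2.trans (by nlinarith)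
  have a3' : |Real.exp t - (1 + t + t ^ 2 / 2)| ≤ t ^ 3 := a3.trans (by nlinarith [pow_pos ht 3])
  have : N c t = t * (Real.exp (c * t) - 1 - c * t) - (Real.exp t - (1 + t + t ^ 2 / 2))
     - (c - 1 / 2) * (t * (Real.exp t - 1 - t)) := by unfold N; ring
  rw [this]
  have b1 : |t * (Real.exp (c * t) - 1 - c * t)| ≤ t ^ 3 := by
    rw [abs_mul, abs_of_pos ht]; nlinarith
  have b2 : |t * (Real.exp t - 1 - t)| ≤ t ^ 3 := by
    rw [abs_mul, abs_of_pos ht]; nlinarith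
  have b3 : |(c - 1 / 2) * (t * (Real.exp t - 1 - t))| ≤ t ^ 3 := by
    rw [abs_mul]
    have : |c - 1 / 2| ≤ 1 := by rw [abs_le]; constructor <;> linarith
    calc _ ≤ 1 * |t * (Real.exp t - 1 - t)| := by gcongr
      _ ≤ _ := by linarith
  rw [abs_le] at *
  constructor <;> linarith [b1.1, b1.2, b3.1, b3.2, a3'.1, a3'.2]

lemma K_bound (a t : ℝ) (ha : 0 < a) (ha' : a ≤ 1) (ht : 0 < t) (ht1 : t ≤ 1) :
    |K a t| ≤ 3 * t := by
  rw [K_eq a t ht]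
  have h1 : t ≤ Real.exp t - 1 := by have := Real.add_one_le_exp t; linarith
  have h2 := N_bound (1 - a) t ht ht1 (by linarith) (by linarith)
  have h3 : 0 < t * (Real.exp t - 1) := by nlinarith
  rw [abs_div, abs_of_pos h3, div_le_iff₀ h3]
  nlinarith [mul_pos ht ht]

lemma F_continuousOn (a : ℝ) : ContinuousOn (F a) (Ioi 0) := by
  unfold F
  apply ContinuousOn.div (by fun_prop) (by fun_prop)
  intro t ht
  have : Real.exp (-t) < 1 := by simpa using ht
  linarith

lemma F_bound (a t : ℝ) (ht : 1 < t) : |F a t| ≤ (1 - Real.exp (-1))⁻¹ * Real.exp (-a * t) := by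
  have h0 : Real.exp (-1) < 1 := by simp
  have h : Real.exp (-t) ≤ Real.exp (-1) := by simpa using ht.le
  unfold F
  rw [abs_div, abs_of_pos (Real.exp_pos _), abs_of_pos (by linarith), div_eq_inv_mul]
  gcongr

/-- First indicator. -/
noncomputable def I1 : ℝ → ℂ := indicator (Ioc 0 1) (fun t : ℝ => (t : ℂ) ^ (-1 : ℂ))
/-- Second indicator. -/
noncomputable def I0 : ℝ → ℂ := indicator (Ioc 0 1) (fun _ => (1 : ℂ))
/-- First indicator, at infinity. -/
noncomputable def J1 : ℝ → ℂ := indicator (Ioi 1) (fun t : ℝ => (t : ℂ) ^ (-1 : ℂ))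
/-- Second indicator, at infinity. -/
noncomputable def J0 : ℝ → ℂ := indicator (Ioi 1) (fun t : ℝ => (t : ℂ) ^ (0 : ℂ))

/-- truncated kernel -/
noncomputable def G (a : ℝ) (t : ℝ) : ℂ := (F a t : ℂ) - (I1 t + (1 / 2 - a : ℂ) • I0 t)

lemma G_of_le (a t : ℝ) (ht : 0 < t) (ht1 : t ≤ 1) : G a t = (K a t : ℂ) := by
  simp [G, I1, I0, K, ht, ht1, cpow_neg_one]; ring

lemma G_of_gt (a t : ℝ) (ht1 : 1 < t) : G a t = (F a t : ℂ) := by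
  simp [G, I1, I0, ht1]

lemma K_eq_G (a t : ℝ) (ht : 0 < t) :
    (K a t : ℂ) = G a t - (J1 t + (1 / 2 - a : ℂ) • J0 t) := by
  rcases le_or_gt t 1 with h | h
  · rw [G_of_le a t ht h]; simp [J1, J0, h]
  · rw [G_of_gt a t h]; simp [J1, J0, h, K, cpow_neg_one]; ring

lemma G_locInt (a : ℝ) : LocallyIntegrableOn (G a) (Ioi 0) := by
  have ind (f : ℝ → ℂ) (hf : ContinuousOn f (Ioi 0)) :
      LocallyIntegrableOn (indicator (Ioc 0 1) f) (Ioi 0) := by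
    intro x hx
    obtain ⟨s, hs, hi⟩ := (hf.locallyIntegrableOn measurableSet_Ioi (μ := volume)) x hx
    exact ⟨s, hs, hi.indicator measurableSet_Ioc⟩
  have hs := LocallyIntegrableOn.smul (f := I0) (μ := volume) (s := Ioi 0)
    (ind _ continuousOn_const) (1 / 2 - a : ℂ)
  refine LocallyIntegrableOn.sub ?_ (LocallyIntegrableOn.add ?_ hs)
  · exact (continuous_ofReal.comp_continuousOn (F_continuousOn a)).locallyIntegrableOn
      measurableSet_Ioi
  · apply ind
    intro x hx
    apply ContinuousAt.continuousWithinAt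
    exact continuousAt_ofReal_cpow_const _ _ (Or.inr (ne_of_gt hx))

lemma G_top (a : ℝ) : G a =O[atTop] fun t => Real.exp (-a * t) := by
  refine IsBigO.of_bound (1 - Real.exp (-1))⁻¹ ?_
  filter_upwards [eventually_gt_atTop 1] with t ht
  rw [G_of_gt a t ht, norm_real, Real.norm_eq_abs, Real.norm_eq_abs, abs_of_pos (Real.exp_pos _)]
  exact F_bound a t ht

lemma G_bot (a : ℝ) (ha : 0 < a) (ha' : a ≤ 1) : G a =O[𝓝[>] 0] (fun t : ℝ => t ^ (-(-1) : ℝ)) := by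
  refine IsBigO.of_bound 3 ?_
  filter_upwards [Ioo_mem_nhdsGT (zero_lt_one)] with t ht
  rw [G_of_le a t ht.1 ht.2.le, norm_real, Real.norm_eq_abs, Real.norm_eq_abs, neg_neg,
    Real.rpow_one, abs_of_pos ht.1]
  exact K_bound a t ha ha' ht.1 ht.2.le

lemma G_conv (a : ℝ) (ha : 0 < a) (ha' : a ≤ 1) (s : ℂ) (hs : -1 < s.re) :
    MellinConvergent (G a) s :=
  mellinConvergent_of_isBigO_rpow_exp ha (G_locInt a) (G_top a) (G_bot a ha ha') hs

lemma G_diff (a : ℝ) (ha : 0 < a) (ha' : a ≤ 1) (s : ℂ) (hs : -1 < s.re) :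
    DifferentiableAt ℂ (mellin (G a)) s :=
  mellin_differentiableAt_of_isBigO_rpow_exp ha (G_locInt a) (G_top a) (G_bot a ha ha') hs

lemma F_hasSum (a t : ℝ) (ht : 0 < t) :
    HasSum (fun n : ℕ => (1 : ℂ) * Real.exp (-(n + a) * t)) (F a t : ℂ) := by
  have h : HasSum (fun n : ℕ => Real.exp (-(n + a) * t)) (F a t) := by
    have := (hasSum_geometric_of_lt_one (Real.exp_pos (-t)).le (by simpa using ht)).mul_left
      (Real.exp (-a * t))
    convert! this using 1
    ext n
    rw [← Real.exp_nat_mul, ← Real.exp_add]; ring_nf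
  simpa using (hasSum_ofReal.2 h)

lemma mellin_F (a : ℝ) (ha : 0 < a) (ha' : a ≤ 1) (s : ℂ) (hs : 1 < s.re) :
    mellin (fun t => (F a t : ℂ)) s = Gamma s * hurwitzZeta (a : UnitAddCircle) s := by
  have hz := hasSum_hurwitzZeta_of_one_lt_re (a := a) ⟨ha.le, ha'⟩ hs
  have h := hasSum_mellin (a := fun _ : ℕ => (1 : ℂ)) (p := fun n : ℕ => (n : ℝ) + a)
    (F := fun t => (F a t : ℂ)) (s := s) (fun i => Or.inr (by positivity)) (by linarith)
    (fun t ht => F_hasSum a t ht) ?_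
  · refine h.unique ?_
    convert! hz.mul_left (Gamma s) using 1
    ext n
    push_cast
    ring
  · convert! hz.summable.norm using 1
    ext n
    have : 0 < (n : ℝ) + a := by positivity
    have h2 := norm_cpow_eq_rpow_re_of_pos this s
    push_cast at h2
    rw [norm_div, h2]

lemma mellin_F_eq (a : ℝ) (ha : 0 < a) (ha' : a ≤ 1) (s : ℂ) (hs : 1 < s.re) :
    Gamma s * hurwitzZeta (a : UnitAddCircle) s =
      mellin (G a) s + (1 / (s - 1) + (1 / 2 - a) * (1 / s)) := by
  have h1 := hasMellin_cpow_Ioc (-1) (s := s) (by simp; linarith)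
  have h0 := hasMellin_one_Ioc (s := s) (by linarith)
  have h0' := hasMellin_const_smul h0.1 (1 / 2 - a : ℂ)
  have h01 := hasMellin_add h1.1 h0'.1
  have hG := hasMellin_add (G_conv a ha ha' s (by linarith)) h01.1
  rw [← mellin_F a ha ha' s hs]
  have := hG.2
  rw [h01.2, h0'.2, h0.2, h1.2] at this
  rw [← sub_eq_add_neg, smul_eq_mul] at this
  rw [← this]
  congr 1
  ext t
  simp only [G, I1, I0]; ring

lemma hasMellin_Ioi (b s : ℂ) (hs : s.re + b.re < 0) :
    HasMellin (indicator (Ioi 1) (fun t : ℝ => (t : ℂ) ^ b)) s (-1 / (s + b)) := by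
  have key : ∀ t ∈ Ioi (0 : ℝ), (t : ℂ) ^ (s - 1) • indicator (Ioi 1) (fun t : ℝ => (t : ℂ) ^ b) t
      = indicator (Ioi 1) (fun t : ℝ => (t : ℂ) ^ (s - 1 + b)) t := by
    intro t ht
    by_cases h : t ∈ Ioi (1 : ℝ)
    · simp only [indicator_of_mem h, smul_eq_mul]
      rw [cpow_add _ _ (ofReal_ne_zero.2 (ne_of_gt ht))]
    · simp [indicator_of_notMem h]
  have hre : (s - 1 + b).re < -1 := by simp; linarith
  have hsub : Ioi (0 : ℝ) ∩ Ioi 1 = Ioi 1 := by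
    ext x; simp only [mem_inter_iff, mem_Ioi]; constructor
    · exact fun h => h.2
    · exact fun h => ⟨by linarith, h⟩
  constructor
  · rw [MellinConvergent, integrableOn_congr_fun key measurableSet_Ioi]
    exact ((integrable_indicator_iff measurableSet_Ioi).2
      (integrableOn_Ioi_cpow_of_lt hre one_pos)).integrableOn
  · rw [mellin, setIntegral_congr_fun measurableSet_Ioi key,
      setIntegral_indicator measurableSet_Ioi, hsub, integral_Ioi_cpow_of_lt hre one_pos, show s - 1 + b + 1 = s + b by ring]
    simp

lemma mellin_K_eq (a : ℝ) (ha : 0 < a) (ha' : a ≤ 1) (s : ℂ) (hs : -1 < s.re) (hs0 : s.re < 0) :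
    HasMellin (fun t => (K a t : ℂ)) s
      (mellin (G a) s + (1 / (s - 1) + (1 / 2 - a) * (1 / s))) := by
  have h1 := hasMellin_Ioi (-1) s (by simp; linarith)
  have h0 := hasMellin_Ioi 0 s (by simpa using hs0)
  have h0' := hasMellin_const_smul h0.1 (1 / 2 - a : ℂ)
  have h01 := hasMellin_add h1.1 h0'.1
  have hG := hasMellin_sub (G_conv a ha ha' s (by linarith)) h01.1
  have e : ∀ t ∈ Ioi (0 : ℝ), (t : ℂ) ^ (s - 1) • (K a t : ℂ) = (t : ℂ) ^ (s - 1) •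
     (G a t - (indicator (Ioi 1) (fun t : ℝ => (t : ℂ) ^ (-1 : ℂ)) t + (1 / 2 - a : ℂ) •
        indicator (Ioi 1) (fun t : ℝ => (t : ℂ) ^ (0 : ℂ)) t)) := by
    intro t ht
    rw [K_eq_G a t ht]; rfl
  constructor
  · rw [MellinConvergent, integrableOn_congr_fun e measurableSet_Ioi]
    exact hG.1
  · rw [mellin, setIntegral_congr_fun measurableSet_Ioi e]
    refine hG.2.trans ?_
    rw [h01.2, h0'.2, h0.2, h1.2, smul_eq_mul, add_zero]
    ring

/-- The domain of continuation. -/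
def U : Set ℂ := ({s | 1 < s.re} ∪ {s | -1 < s.re ∧ 0 < s.im}) ∪ {s | -1 < s.re ∧ s.re < 1}

lemma U_open : IsOpen U := by
  unfold U
  refine ((isOpen_lt continuous_const continuous_re).union ?_).union ?_
  · exact (isOpen_lt continuous_const continuous_re).inter (isOpen_lt continuous_const continuous_im)
  · exact (isOpen_lt continuous_const continuous_re).inter (isOpen_lt continuous_re continuous_const)

lemma U_conn : IsPreconnected U := by
  unfold U
  refine IsPreconnected.union (⟨0, 1⟩ : ℂ) (by simp) (by simp)
    (IsPreconnected.union (⟨2, 1⟩ : ℂ) (by simp) (by norm_num) ?_ ?_) ?_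
  · exact (convex_halfSpace_re_gt 1).isPreconnected
  · exact ((convex_halfSpace_re_gt (-1)).inter (convex_halfSpace_im_gt 0)).isPreconnected
  · exact ((convex_halfSpace_re_gt (-1)).inter (convex_halfSpace_re_lt 1)).isPreconnected

lemma U_prop {s : ℂ} (hs : s ∈ U) : -1 < s.re ∧ s ≠ 1 := by
  rcases hs with (h | h) | h
  · refine ⟨by have : 1 < s.re := h; linarith, ?_⟩
    rintro rfl; simp at h
  · refine ⟨h.1, ?_⟩
    rintro rfl; simp at h
  · refine ⟨h.1, ?_⟩
    rintro rfl; simp at h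

lemma main_eq (a : ℝ) (ha : 0 < a) (ha' : a ≤ 1) :
    EqOn (fun s => Gamma (s + 1) * hurwitzZeta (a : UnitAddCircle) s)
      (fun s => s * mellin (G a) s + (s / (s - 1) + (1 / 2 - a))) U := by
  have d1 : DifferentiableOn ℂ (fun s => Gamma (s + 1) * hurwitzZeta (a : UnitAddCircle) s) U := by
    intro s hs
    obtain ⟨h1, h2⟩ := U_prop hs
    apply DifferentiableAt.differentiableWithinAt
    refine DifferentiableAt.mul ?_ (differentiableAt_hurwitzZeta _ h2)
    refine DifferentiableAt.comp s (differentiableAt_Gamma _ ?_) (by fun_prop)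
    intro m hm
    have := congrArg re hm
    simp at this
    have : (0 : ℝ) ≤ m := by positivity
    linarith
  have d2 : DifferentiableOn ℂ
      (fun s => s * mellin (G a) s + (s / (s - 1) + (1 / 2 - a))) U := by
    intro s hs
    obtain ⟨h1, h2⟩ := U_prop hs
    apply DifferentiableAt.differentiableWithinAt
    have := G_diff a ha ha' s h1
    have h3 : s - 1 ≠ 0 := sub_ne_zero.2 h2
    fun_prop (disch := assumption)
  refine (d1.analyticOnNhd U_open).eqOn_of_preconnected_of_eventuallyEq
    (d2.analyticOnNhd U_open) U_conn (z₀ := 2) (by simp [U]) ?_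
  have : {s : ℂ | 1 < s.re} ∈ 𝓝 (2 : ℂ) :=
    (isOpen_lt continuous_const continuous_re).mem_nhds (by simp)
  filter_upwards [this] with s hs
  have hs : 1 < s.re := hs
  have hs0 : s ≠ 0 := by rintro rfl; simp at hs; linarith
  have hs1 : s - 1 ≠ 0 := by
    intro h; rw [sub_eq_zero.1 h] at hs; simp at hs
  rw [Gamma_add_one _ hs0, mul_assoc, mellin_F_eq a ha ha' s hs]
  field_simp

lemma zeta_zero (a : ℝ) (ha : 0 < a) (ha' : a ≤ 1) :
    hurwitzZeta (a : UnitAddCircle) 0 = ((1 / 2 - a : ℝ) : ℂ) := by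
  have := main_eq a ha ha' (x := 0) (by simp [U])
  simpa using this

lemma zeta_neg_one (a : ℝ) (ha : 0 < a) (ha' : a ≤ 1) :
    hurwitzZeta (a : UnitAddCircle) (-1) = ((-(a ^ 2 - a + 1 / 6) / 2 : ℝ) : ℂ) := by
  have := hurwitzZeta_neg_nat (k := 1) (x := a) one_ne_zero ⟨ha.le, ha'⟩
  simp at this
  rw [this]
  simp [Polynomial.bernoulli, Finset.sum_range_succ, Polynomial.eval_add]
  norm_num [bernoulli]
  ring

lemma zeta_int (a : ℝ) (ha : 0 < a) (ha' : a ≤ 1) (σ : ℝ) (h1 : -1 < σ) (h0 : σ < 0) :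
    (Real.Gamma σ : ℂ) * hurwitzZeta (a : UnitAddCircle) σ =
      ((∫ t in Ioi (0 : ℝ), t ^ (σ - 1) * K a t : ℝ) : ℂ) ∧
    IntegrableOn (fun t => t ^ (σ - 1) * K a t) (Ioi 0) := by
  have hm := mellin_K_eq a ha ha' (σ : ℂ) (by simpa) (by simpa)
  have hs0 : (σ : ℂ) ≠ 0 := by exact_mod_cast h0.ne
  have hs1 : (σ : ℂ) - 1 ≠ 0 := by
    have : σ - 1 ≠ 0 := by linarith
    exact_mod_cast this
  have e : ∀ t ∈ Ioi (0 : ℝ), (t : ℂ) ^ ((σ : ℂ) - 1) • (K a t : ℂ) =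
      ((t ^ (σ - 1) * K a t : ℝ) : ℂ) := by
    intro t ht
    rw [smul_eq_mul, ofReal_mul, ofReal_cpow (le_of_lt ht)]
    push_cast; rfl
  constructor
  · have h := main_eq a ha ha' (x := (σ : ℂ)) (Or.inr ⟨by simpa, by simp; linarith⟩)
    dsimp only at h
    have h2 := hm.2
    rw [mellin, setIntegral_congr_fun measurableSet_Ioi e] at h2
    have h3 := integral_ofReal (𝕜 := ℂ) (μ := volume.restrict (Ioi 0))
      (f := fun t : ℝ => t ^ (σ - 1) * K a t)
    replace h2 := h3.symm.trans h2
    refine Eq.trans ?_ h2.symm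
    rw [Gamma_add_one _ hs0, mul_assoc, Gamma_ofReal] at h
    apply mul_left_cancel₀ hs0
    rw [h]
    field_simp
  · have h2 := hm.1
    rw [MellinConvergent, integrableOn_congr_fun e measurableSet_Ioi] at h2
    have := h2.re
    simpa [IntegrableOn] using this

lemma zeta_real (a : ℝ) (ha : 0 < a) (ha' : a ≤ 1) (σ : ℝ) (h1 : -1 < σ) (h0 : σ < 0) :
    (hurwitzZeta (a : UnitAddCircle) σ).im = 0 := by
  have h := (zeta_int a ha ha' σ h1 h0).1
  have h2 := congrArg im h
  rw [im_ofReal_mul, ofReal_im] at h2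
  have : Real.Gamma σ ≠ 0 := by
    apply Real.Gamma_ne_zero
    intro m hm
    rcases Nat.eq_zero_or_pos m with rfl | hm'
    · simp at hm; linarith
    · have : (1 : ℝ) ≤ m := by exact_mod_cast hm'
      linarith
  exact (mul_eq_zero.1 h2).resolve_left this

lemma exists_zero (a : ℝ) (ha : 0 < a) (ha' : a ≤ 1)
    (h : (1 / 2 - a) * (-(a ^ 2 - a + 1 / 6) / 2) < 0) :
    ∃ σ : ℝ, σ ∈ Set.Ioo (-1 : ℝ) 0 ∧ hurwitzZeta (a : UnitAddCircle) (σ : ℂ) = 0 := by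
  set f : ℝ → ℝ := fun σ => (hurwitzZeta (a : UnitAddCircle) (σ : ℂ)).re with hf
  have hc : ContinuousOn f (Icc (-1) 0) := by
    intro x hx
    apply ContinuousAt.continuousWithinAt
    have hx1 : (x : ℂ) ≠ 1 := by
      have : x ≠ 1 := by linarith [hx.2]
      exact_mod_cast this
    have := (differentiableAt_hurwitzZeta (a : UnitAddCircle) hx1).continuousAt
    exact continuous_re.continuousAt.comp
      (ContinuousAt.comp (f := fun x : ℝ => (x : ℂ)) this continuous_ofReal.continuousAt)
  have f0 : f 0 = 1 / 2 - a := by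
    simp only [hf, ofReal_zero, zeta_zero a ha ha', ofReal_re]
  have f1 : f (-1) = -(a ^ 2 - a + 1 / 6) / 2 := by
    simp only [hf, ofReal_neg, ofReal_one, zeta_neg_one a ha ha', ofReal_re]
  rw [← f0, ← f1] at h
  have : ∃ σ ∈ Ioo (-1 : ℝ) 0, f σ = 0 := by
    rcases mul_neg_iff.1 h with ⟨h1, h2⟩ | ⟨h1, h2⟩
    · exact intermediate_value_Ioo (by norm_num) hc ⟨h2, h1⟩
    · exact intermediate_value_Ioo' (by norm_num) hc ⟨h1, h2⟩
  obtain ⟨σ, hσ, h0⟩ := this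
  exact ⟨σ, hσ, Complex.ext h0 (zeta_real a ha ha' σ hσ.1 hσ.2)⟩

lemma pos_int (f : ℝ → ℝ) (hf : IntegrableOn f (Ioi 0)) (h : ∀ t ∈ Ioi (0 : ℝ), 0 < f t) :
    0 < ∫ t in Ioi (0 : ℝ), f t := by
  rw [setIntegral_pos_iff_support_of_nonneg_ae _ hf]
  · have : Function.support f ∩ Ioi 0 = Ioi 0 := by
      ext t; simp only [mem_inter_iff, Function.mem_support, and_iff_right_iff_imp]
      exact fun ht => (h t ht).ne'
    rw [this]; simp
  · filter_upwards [ae_restrict_mem measurableSet_Ioi] with t ht using (h t ht).le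

lemma no_zero (a : ℝ) (ha : 0 < a) (ha' : a ≤ 1)
    (h : (∀ t, 0 < t → 0 < K a t) ∨ (∀ t, 0 < t → K a t < 0)) (σ : ℝ) (h1 : -1 < σ) (h0 : σ < 0) :
    hurwitzZeta (a : UnitAddCircle) (σ : ℂ) ≠ 0 := by
  intro hz
  obtain ⟨e, hi⟩ := zeta_int a ha ha' σ h1 h0
  rw [hz, mul_zero] at e
  have e' : ∫ t in Ioi (0 : ℝ), t ^ (σ - 1) * K a t = 0 := by exact_mod_cast e.symm
  rcases h with h | h
  · have := pos_int _ hi (fun t ht => mul_pos (Real.rpow_pos_of_pos ht _) (h t ht))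
    linarith
  · have := pos_int _ hi.neg (fun t ht => by
      have := mul_pos_of_neg_of_neg (neg_neg_of_pos (Real.rpow_pos_of_pos ht (σ - 1))) (h t ht)
      simpa using this)
    simp only [Pi.neg_apply, integral_neg] at this
    linarith

end HZ

theorem hurwitzZeta_has_real_zero_in_Ioo_neg_one_zero_iff (a : ℝ) (ha : 0 < a) (ha' : a ≤ 1) :
    (∃ σ : ℝ, σ ∈ Set.Ioo (-1 : ℝ) 0 ∧ hurwitzZeta (a : UnitAddCircle) (σ : ℂ) = 0) ↔
      (0 < a ∧ a < (3 - Real.sqrt 3) / 6) ∨ (1 / 2 < a ∧ a < (3 + Real.sqrt 3) / 6) := by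
  have s1 : Real.sqrt 3 ^ 2 = 3 := Real.sq_sqrt (by norm_num)
  have s2 : 1.7 < Real.sqrt 3 := Real.lt_sqrt_of_sq_lt (by norm_num)
  have s3 : Real.sqrt 3 < 1.8 := (Real.sqrt_lt' (by norm_num)).2 (by norm_num)
  set r := Real.sqrt 3
  have fac : a ^ 2 - a + 1 / 6 = (a - (3 - r) / 6) * (a - (3 + r) / 6) := by
    linear_combination (1 / 36) * s1
  norm_num at s2 s3
  constructor
  · rintro ⟨σ, hσ, hz⟩
    by_contra hcon
    push Not at hcon
    obtain ⟨c1, c2⟩ := hcon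
    have c1 := c1 ha
    refine HZ.no_zero a ha ha' ?_ σ hσ.1 hσ.2 hz
    have den (t : ℝ) (ht : 0 < t) : 0 < t * (Real.exp t - 1) := by
      have := Real.add_one_lt_exp ht.ne'
      apply mul_pos ht; linarith
    rcases le_or_gt a (1 / 2) with h | h
    · right
      intro t ht
      rw [HZ.K_eq a t ht]
      refine div_neg_of_neg_of_pos (HZ.N_neg _ t ht (by linarith) ?_) (den t ht)
      have : (a - (3 - r) / 6) * (a - (3 + r) / 6) ≤ 0 :=
        mul_nonpos_of_nonneg_of_nonpos (by linarith) (by linarith)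
      nlinarith
    · left
      intro t ht
      have c2 := c2 h
      rw [HZ.K_eq a t ht]
      refine div_pos (HZ.N_pos _ t ht (by linarith) (by linarith) ?_) (den t ht)
      have : 0 ≤ (a - (3 - r) / 6) * (a - (3 + r) / 6) :=
        mul_nonneg (by linarith) (by linarith)
      nlinarith
  · intro h
    apply HZ.exists_zero a ha ha'
    rw [fac]
    rcases h with ⟨_, h⟩ | ⟨h, h'⟩
    · have : 0 < (a - (3 - r) / 6) * (a - (3 + r) / 6) :=
        mul_pos_of_neg_of_neg (by linarith) (by linarith)
      apply mul_neg_of_pos_of_neg <;> linarith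
    · have : (a - (3 - r) / 6) * (a - (3 + r) / 6) < 0 :=
        mul_neg_of_pos_of_neg (by linarith) (by linarith)
      apply mul_neg_of_neg_of_pos <;> linarith
end

section
/- Let b₂⁻ = (3 − √3)/6 and suppose 0 < a ≤ b₂⁻. Then ζ(σ, a) < 0 for every real σ with −2 < σ < −1. -/
open HurwitzZeta Set

open MeasureTheory in
lemma aux_hasSum (c : ℕ → ℝ) (hc0 : c 0 = 0) (hc : ∀ n, |c n| ≤ 1) (G : ℝ → ℝ)
    (hG : ∀ t, 0 < t → HasSum (fun n : ℕ => c n * Real.exp (-n * t)) (G t))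
    (s : ℝ) (hs : 1 < s) :
    HasSum (fun n : ℕ => Real.Gamma s * c n / (n : ℝ) ^ s)
      (∫ t in Ioi (0 : ℝ), t ^ (s - 1) * G t) := by
  have h := hasSum_mellin (a := fun n : ℕ => (c n : ℂ)) (p := fun n : ℕ => (n : ℝ))
    (F := fun t => (G t : ℂ)) (s := (s : ℂ)) ?_ ?_ ?_ ?_
  · rw [← Complex.hasSum_ofReal]
    convert h using 1
    · ext n
      rw [Complex.Gamma_ofReal]
      push_cast
      rw [Complex.ofReal_cpow (by positivity)]
      simp
    · rw [mellin, ← integral_complex_ofReal]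
      refine setIntegral_congr_fun measurableSet_Ioi (fun t ht => ?_)
      have ht' : 0 < t := ht
      simp only [smul_eq_mul]
      push_cast
      rw [Complex.ofReal_cpow ht'.le]
      simp
  · intro i
    rcases Nat.eq_zero_or_pos i with h | h
    · left; simp [h, hc0]
    · right; exact_mod_cast h
  · simp; linarith
  · intro t ht
    have := hG t ht
    rw [← Complex.hasSum_ofReal] at this
    convert this using 2
    push_cast
    rfl
  · refine Summable.of_nonneg_of_le (fun n => by positivity) (fun n => ?_)
      (Real.summable_one_div_nat_rpow.mpr hs)
    simp only [Complex.norm_real, Complex.ofReal_re, Real.norm_eq_abs]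
    gcongr
    exact hc n

open MeasureTheory in
lemma aux_base_integrable (s : ℝ) (hs : 1 < s) :
    IntegrableOn (fun t : ℝ => t ^ (s - 1) * (Real.exp (-t) / (1 - Real.exp (-t)))) (Ioi 0) := by
  by_contra hcon
  have h := aux_hasSum (fun n => if n = 0 then 0 else 1) (by simp)
    (fun n => by split_ifs <;> simp) (fun t => Real.exp (-t) / (1 - Real.exp (-t))) ?_ s hs
  · rw [integral_undef hcon] at h
    have hG := Real.Gamma_pos_of_pos (show 0 < s by linarith)
    have h0 : ∀ n : ℕ, 0 ≤ Real.Gamma s * (if n = 0 then 0 else 1) / (n : ℝ) ^ s := by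
      intro n; split_ifs <;> positivity
    have := (hasSum_zero_iff_of_nonneg h0).mp h
    have h1 := congrFun this 1
    simp at h1
    linarith
  · intro t ht
    have hr : Real.exp (-t) < 1 := by simpa using ht
    rw [← hasSum_nat_add_iff' 1]
    have := (hasSum_geometric_of_lt_one (Real.exp_pos (-t)).le hr).mul_left (Real.exp (-t))
    convert! this using 1
    · ext n
      simp [← Real.exp_nat_mul, ← Real.exp_add]
      ring
    · simp [div_eq_mul_inv]

open MeasureTheory in
lemma aux_integrable (c : ℕ → ℝ) (hc0 : c 0 = 0) (hc : ∀ n, |c n| ≤ 1) (G : ℝ → ℝ)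
    (hGm : Measurable G)
    (hG : ∀ t, 0 < t → HasSum (fun n : ℕ => c n * Real.exp (-n * t)) (G t))
    (s : ℝ) (hs : 1 < s) :
    IntegrableOn (fun t : ℝ => t ^ (s - 1) * G t) (Ioi 0) := by
  refine Integrable.mono' (aux_base_integrable s hs) (by fun_prop) ?_
  refine (ae_restrict_iff' measurableSet_Ioi).mpr (Filter.Eventually.of_forall fun t ht => ?_)
  have ht' : 0 < t := ht
  rw [norm_mul, Real.norm_of_nonneg (by positivity : 0 ≤ t ^ (s - 1))]
  gcongr
  have hr : Real.exp (-t) < 1 := by simpa using ht'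
  have h1 := hG t ht
  rw [← hasSum_nat_add_iff' 1] at h1
  have h2 := (hasSum_geometric_of_lt_one (Real.exp_pos (-t)).le hr).mul_left (Real.exp (-t))
  simp only [Finset.range_one, Finset.sum_singleton, hc0, zero_mul, sub_zero] at h1
  rw [← h1.tsum_eq, div_eq_mul_inv]
  refine tsum_of_norm_bounded h2 fun n => ?_
  rw [norm_mul, Real.norm_eq_abs, Real.norm_of_nonneg (Real.exp_pos _).le]
  calc _ ≤ 1 * Real.exp (-((n+1 : ℕ) : ℝ) * t) := by gcongr; exact hc _
    _ = _ := by
      simp [← Real.exp_nat_mul, ← Real.exp_add]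
      ring

/-- denominators -/
lemma aux_den_pos (θ t : ℝ) (ht : 0 < t) :
    0 < 1 - 2 * Real.exp (-t) * Real.cos θ + Real.exp (-t) ^ 2 := by
  have hr : Real.exp (-t) < 1 := by simpa using ht
  nlinarith [Real.cos_le_one θ, Real.exp_pos (-t)]

lemma aux_geom (θ t : ℝ) (ht : 0 < t) :
    HasSum (fun n : ℕ => (if n = 0 then 0 else Real.cos (θ * n)) * Real.exp (-n * t))
      ((Real.exp (-t) * Real.cos θ - Real.exp (-t) ^ 2) /
        (1 - 2 * Real.exp (-t) * Real.cos θ + Real.exp (-t) ^ 2)) ∧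
    HasSum (fun n : ℕ => (if n = 0 then 0 else Real.sin (θ * n)) * Real.exp (-n * t))
      ((Real.exp (-t) * Real.sin θ) /
        (1 - 2 * Real.exp (-t) * Real.cos θ + Real.exp (-t) ^ 2)) := by
  have hr : Real.exp (-t) < 1 := by simpa using ht
  have hD := aux_den_pos θ t ht
  set z : ℂ := Complex.exp (-t + θ * Complex.I) with hz
  have hn : ‖z‖ < 1 := by
    rw [hz, Complex.norm_exp]; simpa using ht
  have hre : z.re = Real.exp (-t) * Real.cos θ := by simp [hz, Complex.exp_re]
  have him : z.im = Real.exp (-t) * Real.sin θ := by simp [hz, Complex.exp_im]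
  have h := (hasSum_geometric_of_norm_lt_one hn).mul_left z
  have hpow : ∀ n : ℕ, z * z ^ n = Complex.exp (-((n + 1 : ℕ) : ℝ) * t + (θ * ((n + 1 : ℕ) : ℝ) : ℝ) * Complex.I) := by
    intro n
    rw [← pow_succ', hz, ← Complex.exp_nat_mul]
    congr 1
    push_cast
    ring
  have hns : Complex.normSq (1 - z) =
      1 - 2 * Real.exp (-t) * Real.cos θ + Real.exp (-t) ^ 2 := by
    rw [Complex.normSq_apply]
    simp only [Complex.sub_re, Complex.sub_im, Complex.one_re, Complex.one_im, hre, him]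
    linear_combination (Real.exp (-t)) ^ 2 * Real.sin_sq_add_cos_sq θ
  constructor
  · rw [← hasSum_nat_add_iff' 1]
    convert! Complex.hasSum_re h using 1
    · ext n
      rw [hpow, Complex.exp_re]
      simp
      ring
    · rw [Complex.mul_re, Complex.inv_re, Complex.inv_im, hns, hre, him]
      simp only [Complex.sub_re, Complex.sub_im, Complex.one_re, Complex.one_im, hre, him]
      simp
      linear_combination (Real.exp (-t) ^ 2 /
        (1 - 2 * Real.exp (-t) * Real.cos θ + Real.exp (-t) ^ 2)) * Real.sin_sq_add_cos_sq θ
  · rw [← hasSum_nat_add_iff' 1]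
    convert! Complex.hasSum_im h using 1
    · ext n
      rw [hpow, Complex.exp_im]
      simp
      ring
    · rw [Complex.mul_im, Complex.inv_re, Complex.inv_im, hns, hre, him]
      simp only [Complex.sub_re, Complex.sub_im, Complex.one_re, Complex.one_im, hre, him]
      simp
      field_simp
      ring

lemma aux_hasSum_cos (θ s : ℝ) (hs : 1 < s) :
    HasSum (fun n : ℕ => Real.Gamma s * (Real.cos (θ * n) / (n : ℝ) ^ s))
      (∫ t in Ioi (0 : ℝ), t ^ (s - 1) * ((Real.exp (-t) * Real.cos θ - Real.exp (-t) ^ 2) /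
        (1 - 2 * Real.exp (-t) * Real.cos θ + Real.exp (-t) ^ 2))) := by
  have h := aux_hasSum (fun n => if n = 0 then 0 else Real.cos (θ * n)) (by simp)
    (fun n => by split_ifs; · simp
                 exact Real.abs_cos_le_one _) _ (fun t ht => (aux_geom θ t ht).1) s hs
  convert h using 2 with n
  rcases eq_or_ne n 0 with rfl | hn
  · simp [Real.zero_rpow (by linarith : s ≠ 0)]
  · simp [hn, mul_div_assoc]

lemma aux_hasSum_sin (θ s : ℝ) (hs : 1 < s) :
    HasSum (fun n : ℕ => Real.Gamma s * (Real.sin (θ * n) / (n : ℝ) ^ s))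
      (∫ t in Ioi (0 : ℝ), t ^ (s - 1) * ((Real.exp (-t) * Real.sin θ) /
        (1 - 2 * Real.exp (-t) * Real.cos θ + Real.exp (-t) ^ 2))) := by
  have h := aux_hasSum (fun n => if n = 0 then 0 else Real.sin (θ * n)) (by simp)
    (fun n => by split_ifs; · simp
                 exact Real.abs_sin_le_one _) _ (fun t ht => (aux_geom θ t ht).2) s hs
  convert h using 2 with n
  rcases eq_or_ne n 0 with rfl | hn
  · simp
  · simp [hn, mul_div_assoc]

open MeasureTheory in
lemma aux_cos_integrable (θ s : ℝ) (hs : 1 < s) :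
    IntegrableOn (fun t : ℝ => t ^ (s - 1) * ((Real.exp (-t) * Real.cos θ - Real.exp (-t) ^ 2) /
        (1 - 2 * Real.exp (-t) * Real.cos θ + Real.exp (-t) ^ 2))) (Ioi 0) :=
  aux_integrable (fun n => if n = 0 then 0 else Real.cos (θ * n)) (by simp)
    (fun n => by split_ifs; · simp
                 exact Real.abs_cos_le_one _) _ (by fun_prop) (fun t ht => (aux_geom θ t ht).1) s hs

open MeasureTheory in
lemma aux_sin_integrable (θ s : ℝ) (hs : 1 < s) :
    IntegrableOn (fun t : ℝ => t ^ (s - 1) * ((Real.exp (-t) * Real.sin θ) /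
        (1 - 2 * Real.exp (-t) * Real.cos θ + Real.exp (-t) ^ 2))) (Ioi 0) :=
  aux_integrable (fun n => if n = 0 then 0 else Real.sin (θ * n)) (by simp)
    (fun n => by split_ifs; · simp
                 exact Real.abs_sin_le_one _) _ (by fun_prop) (fun t ht => (aux_geom θ t ht).2) s hs

open MeasureTheory in
lemma aux_sin_pos (θ s : ℝ) (hs : 1 < s) (hθ : 0 < Real.sin θ) :
    0 < ∫ t in Ioi (0 : ℝ), t ^ (s - 1) * ((Real.exp (-t) * Real.sin θ) /
        (1 - 2 * Real.exp (-t) * Real.cos θ + Real.exp (-t) ^ 2)) := by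
  have hpos : ∀ t ∈ Ioi (0 : ℝ), 0 < t ^ (s - 1) * ((Real.exp (-t) * Real.sin θ) /
        (1 - 2 * Real.exp (-t) * Real.cos θ + Real.exp (-t) ^ 2)) := by
    intro t ht
    have ht' : 0 < t := ht
    have := aux_den_pos θ t ht
    positivity
  rw [setIntegral_pos_iff_support_of_nonneg_ae _ (aux_sin_integrable θ s hs)]
  · rw [inter_eq_right.mpr (fun t ht => Function.mem_support.mpr (hpos t ht).ne')]
    simp
  · exact (ae_restrict_iff' measurableSet_Ioi).mpr
      (Filter.Eventually.of_forall fun t ht => (hpos t ht).le)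

open MeasureTheory in
lemma aux_cos_nonneg (θ s : ℝ) (hs : 2 < s) (hc : 0 < Real.cos θ)
    (h2 : 0 ≤ ∫ t in Ioi (0 : ℝ), t ^ ((2 : ℝ) - 1) *
      ((Real.exp (-t) * Real.cos θ - Real.exp (-t) ^ 2) /
        (1 - 2 * Real.exp (-t) * Real.cos θ + Real.exp (-t) ^ 2))) :
    0 ≤ ∫ t in Ioi (0 : ℝ), t ^ (s - 1) *
      ((Real.exp (-t) * Real.cos θ - Real.exp (-t) ^ 2) /
        (1 - 2 * Real.exp (-t) * Real.cos θ + Real.exp (-t) ^ 2)) := by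
  set x := -Real.log (Real.cos θ) with hx
  have hx0 : 0 ≤ x := by
    have := Real.log_nonpos hc.le (Real.cos_le_one θ)
    linarith
  have hex : Real.cos θ = Real.exp (-x) := by rw [hx, neg_neg, Real.exp_log hc]
  refine le_trans (mul_nonneg (by positivity : 0 ≤ x ^ (s - 2)) h2) ?_
  rw [← integral_const_mul]
  refine setIntegral_mono_on ((aux_cos_integrable θ 2 (by norm_num)).const_mul _)
    (aux_cos_integrable θ s (by linarith)) measurableSet_Ioi fun t ht => ?_
  have ht' : 0 < t := ht
  have hD := aux_den_pos θ t ht'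
  have hsplit : t ^ (s - 1) = t ^ (s - 2) * t ^ ((2 : ℝ) - 1) := by
    rw [← Real.rpow_add ht']; congr 1; ring
  rw [hsplit, mul_assoc (t ^ (s - 2))]
  rcases le_total x t with h | h
  · have h1 : x ^ (s - 2) ≤ t ^ (s - 2) := Real.rpow_le_rpow hx0 h (by linarith)
    have h3 : Real.exp (-t) ≤ Real.cos θ := by rw [hex]; gcongr
    have h4 : 0 ≤ Real.exp (-t) * Real.cos θ - Real.exp (-t) ^ 2 := by
      nlinarith [Real.exp_pos (-t)]
    gcongr
  · have h1 : t ^ (s - 2) ≤ x ^ (s - 2) := Real.rpow_le_rpow ht'.le h (by linarith)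
    have h3 : Real.cos θ ≤ Real.exp (-t) := by rw [hex]; gcongr
    have h4 : Real.exp (-t) * Real.cos θ - Real.exp (-t) ^ 2 ≤ 0 := by
      nlinarith [Real.exp_pos (-t)]
    refine mul_le_mul_of_nonpos_right h1 ?_
    exact mul_nonpos_of_nonneg_of_nonpos (by positivity) (div_nonpos_of_nonpos_of_nonneg h4 hD.le)

lemma aux_b2 (a : ℝ) (ha : 0 < a) (ha' : a ≤ (3 - Real.sqrt 3) / 6) :
    a < 1 / 4 ∧ 0 ≤ a ^ 2 - a + 1 / 6 := by
  have h3 : Real.sqrt 3 ^ 2 = 3 := Real.sq_sqrt (by norm_num)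
  have h4 : 3 / 2 < Real.sqrt 3 := by
    rw [Real.lt_sqrt (by norm_num)]; norm_num
  constructor
  · linarith
  · nlinarith

lemma aux_two (a : ℝ) (ha : 0 < a) (ha' : a ≤ (3 - Real.sqrt 3) / 6) :
    0 ≤ ∫ t in Ioi (0 : ℝ), t ^ ((2 : ℝ) - 1) *
      ((Real.exp (-t) * Real.cos (2 * Real.pi * a) - Real.exp (-t) ^ 2) /
        (1 - 2 * Real.exp (-t) * Real.cos (2 * Real.pi * a) + Real.exp (-t) ^ 2)) := by
  obtain ⟨h1, h2⟩ := aux_b2 a ha ha'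
  have hA := aux_hasSum_cos (2 * Real.pi * a) 2 (by norm_num)
  have hB := hasSum_one_div_nat_pow_mul_cos (k := 1) one_ne_zero (x := a)
    ⟨ha.le, by linarith⟩
  have hG : Real.Gamma 2 = 1 := Real.Gamma_two
  rw [hG] at hA
  have hE : (Polynomial.map (algebraMap ℚ ℝ) (Polynomial.bernoulli (2 * 1))).eval a
      = a ^ 2 - a + 1 / 6 := by
    simp [Polynomial.bernoulli, Finset.sum_range_succ, bernoulli_eq_bernoulli'_of_ne_one]
    ring
  rw [hE] at hB
  have : (fun n : ℕ => 1 / (n : ℝ) ^ (2 * 1) * Real.cos (2 * Real.pi * n * a)) =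
      (fun n : ℕ => (1 : ℝ) * (Real.cos (2 * Real.pi * a * n) / (n : ℝ) ^ (2 : ℝ))) := by
    ext n
    rw [show 2 * Real.pi * n * a = 2 * Real.pi * a * n by ring]
    norm_cast
    ring
  rw [this] at hB
  rw [hA.unique hB]
  have : (0 : ℝ) ≤ (-1 : ℝ) ^ (1 + 1) * (2 * Real.pi) ^ (2 * 1) / 2 / ((2 * 1).factorial : ℝ) := by
    norm_num; positivity
  positivity

/-- If `0 < a ≤ (3 - √3)/6`, then `ζ(σ, a) < 0` for every real `σ ∈ (-2, -1)`. -/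
theorem hurwitzZeta_neg_on_Ioo_neg_two_neg_one (a : ℝ) (ha : 0 < a)
    (ha' : a ≤ (3 - Real.sqrt 3) / 6) :
    ∀ σ : ℝ, -2 < σ → σ < -1 →
      (hurwitzZeta (a : UnitAddCircle) (σ : ℂ)).im = 0 ∧
        (hurwitzZeta (a : UnitAddCircle) (σ : ℂ)).re < 0 := by
  intro σ hσ1 hσ2
  obtain ⟨s, rfl⟩ : ∃ s : ℝ, σ = 1 - s := ⟨1 - σ, by ring⟩
  have hs2 : 2 < s := by linarith
  have hs3 : s < 3 := by linarith
  obtain ⟨h1, -⟩ := aux_b2 a ha ha'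
  have hpi := Real.pi_pos
  have hcosθ : 0 < Real.cos (2 * Real.pi * a) :=
    Real.cos_pos_of_mem_Ioo ⟨by nlinarith, by nlinarith⟩
  have hsinθ : 0 < Real.sin (2 * Real.pi * a) :=
    Real.sin_pos_of_pos_of_lt_pi (by positivity) (by nlinarith)
  have hΓ := Real.Gamma_pos_of_pos (show 0 < s by linarith)
  have hre : 1 < (s : ℂ).re := by simp; linarith
  -- cosine series
  obtain ⟨C, hC, hC0⟩ : ∃ C : ℝ, cosZeta a s = C ∧ 0 ≤ C := by
    have hA := (aux_hasSum_cos (2 * Real.pi * a) s (by linarith)).mul_left (Real.Gamma s)⁻¹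
    have hI := aux_cos_nonneg _ s hs2 hcosθ (aux_two a ha ha')
    refine ⟨_, ?_, mul_nonneg (inv_nonneg.mpr hΓ.le) hI⟩
    refine (hasSum_nat_cosZeta a hre).unique ?_
    rw [← Complex.hasSum_ofReal] at hA
    convert hA using 2 with n
    rw [inv_mul_cancel_left₀ hΓ.ne', Complex.ofReal_div, Complex.ofReal_cpow (by positivity)]
    simp
  obtain ⟨S, hS, hS0⟩ : ∃ S : ℝ, sinZeta a s = S ∧ 0 < S := by
    have hA := (aux_hasSum_sin (2 * Real.pi * a) s (by linarith)).mul_left (Real.Gamma s)⁻¹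
    have hI := aux_sin_pos _ s (by linarith) hsinθ
    refine ⟨_, ?_, mul_pos (inv_pos.mpr hΓ) hI⟩
    refine (hasSum_nat_sinZeta a hre).unique ?_
    rw [← Complex.hasSum_ofReal] at hA
    convert hA using 2 with n
    rw [inv_mul_cancel_left₀ hΓ.ne', Complex.ofReal_div, Complex.ofReal_cpow (by positivity)]
    simp
  have hne : ∀ n : ℕ, (s : ℂ) ≠ -n := by
    intro n h
    have := congrArg Complex.re h
    simp at this
    have hn : (0 : ℝ) ≤ n := n.cast_nonneg
    linarith
  have hne1 : (s : ℂ) ≠ 1 := by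
    intro h
    have := congrArg Complex.re h
    simp at this
    linarith
  have hcos : Real.cos (Real.pi * s / 2) < 0 :=
    Real.cos_neg_of_pi_div_two_lt_of_lt (by nlinarith) (by nlinarith)
  have hsin : Real.sin (Real.pi * s / 2) < 0 := by
    have : 0 < Real.sin (Real.pi * s / 2 - Real.pi) :=
      Real.sin_pos_of_pos_of_lt_pi (by nlinarith) (by nlinarith)
    rw [Real.sin_sub_pi] at this
    linarith
  have key : hurwitzZeta (a : UnitAddCircle) ((1 - s : ℝ) : ℂ) =
      ((2 * (2 * Real.pi) ^ (-s) * Real.Gamma s *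
        (Real.cos (Real.pi * s / 2) * C + Real.sin (Real.pi * s / 2) * S) : ℝ) : ℂ) := by
    rw [hurwitzZeta, Complex.ofReal_sub, Complex.ofReal_one,
      hurwitzZetaEven_one_sub _ hne (Or.inr hne1), hurwitzZetaOdd_one_sub _ hne, hC, hS,
      Complex.Gamma_ofReal]
    push_cast
    rw [Complex.ofReal_cpow (by positivity)]
    push_cast
    ring
  rw [key]
  refine ⟨Complex.ofReal_im _, ?_⟩
  rw [Complex.ofReal_re]
  have hp : 0 < 2 * (2 * Real.pi) ^ (-s) * Real.Gamma s := by positivity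
  refine mul_neg_of_pos_of_neg hp ?_
  nlinarith [mul_nonneg (neg_nonneg.mpr hcos.le) hC0, mul_pos (neg_pos.mpr hsin) hS0]
end

section
/- Let b₂⁺ = (3 + √3)/6 and suppose 1/2 ≤ a ≤ b₂⁺. Then ζ(σ, a) > 0 for every real σ with −2 < σ < −1. -/
open HurwitzZeta Set

lemma aux_mellin_nonpos (a : ℕ → ℝ) (B : ℝ) (hB : ∀ n, |a n| ≤ B) (s : ℝ) (hs : 1 < s)
    (F : ℝ → ℝ) (hF0 : ∀ t, 0 < t → F t ≤ 0)
    (hF : ∀ t, 0 < t → HasSum (fun n : ℕ => a n * Real.exp (-((n : ℝ) + 1) * t)) (F t))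
    (A : ℝ) (hA : HasSum (fun n : ℕ => a n / ((n : ℝ) + 1) ^ s) A) : A ≤ 0 := by
  have hsum : Summable (fun n : ℕ => 1 / ((n : ℝ) + 1) ^ s) := by
    have := (summable_nat_add_iff 1).mpr (Real.summable_one_div_nat_rpow.mpr hs)
    simpa using this
  have h := hasSum_mellin (a := fun n => (a n : ℂ)) (p := fun n : ℕ => (n : ℝ) + 1)
    (F := fun t => (F t : ℂ)) (s := (s : ℂ)) (fun n => Or.inr (by positivity)) (by simp; linarith)
    (fun t ht => by exact_mod_cast Complex.hasSum_ofReal.mpr (hF t ht)) (by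
      refine Summable.of_nonneg_of_le (fun n => by positivity) (fun n => ?_) (hsum.mul_left B)
      simp only [Complex.norm_real, Complex.ofReal_re, Real.norm_eq_abs]
      rw [mul_one_div]
      gcongr
      exact hB n)
  have hm : mellin (fun t => (F t : ℂ)) (s : ℂ) =
      ((∫ t in Ioi (0 : ℝ), t ^ (s - 1) * F t : ℝ) : ℂ) := by
    rw [mellin, ← integral_complex_ofReal]
    refine MeasureTheory.setIntegral_congr_fun measurableSet_Ioi fun t ht => ?_
    simp only [smul_eq_mul]
    push_cast [Complex.ofReal_cpow (le_of_lt ht)]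
    rfl
  have h2 : HasSum (fun n : ℕ => Real.Gamma s * (a n / ((n : ℝ) + 1) ^ s))
      (∫ t in Ioi (0 : ℝ), t ^ (s - 1) * F t) := by
    rw [← Complex.hasSum_ofReal, ← hm]
    convert h using 2 with n
    push_cast [Complex.ofReal_cpow (show (0 : ℝ) ≤ (n : ℝ) + 1 by positivity), Complex.Gamma_ofReal]
    ring
  have h3 := h2.unique (hA.mul_left (Real.Gamma s))
  have h4 : (∫ t in Ioi (0 : ℝ), t ^ (s - 1) * F t) ≤ 0 := by
    refine MeasureTheory.setIntegral_nonpos measurableSet_Ioi fun t ht => ?_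
    exact mul_nonpos_of_nonneg_of_nonpos (Real.rpow_nonneg (le_of_lt ht) _) (hF0 t ht)
  rw [h3] at h4
  have := Real.Gamma_pos_of_pos (show 0 < s by linarith)
  exact nonpos_of_mul_nonpos_right h4 this

lemma aux_geom_s10 (x y θ : ℝ) (hx : 0 < x) (hx1 : x < 1) :
    HasSum (fun n : ℕ => Real.cos (((n : ℝ) + 1) * y + θ) * x ^ (n + 1))
      ((x * Real.cos (y + θ) - x ^ 2 * Real.cos θ) / (1 - 2 * x * Real.cos y + x ^ 2)) := by
  have hexp : ∀ u : ℝ, Complex.exp (u * Complex.I) = ⟨Real.cos u, Real.sin u⟩ := by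
    intro u
    apply Complex.ext <;> simp [Complex.exp_ofReal_mul_I_re, Complex.exp_ofReal_mul_I_im]
  set z : ℂ := x * Complex.exp (y * Complex.I) with hz
  have hnz : ‖z‖ < 1 := by
    rw [hz, norm_mul, Complex.norm_exp_ofReal_mul_I, Complex.norm_real, Real.norm_eq_abs,
      abs_of_pos hx]; linarith
  have h := (hasSum_geometric_of_norm_lt_one hnz).mul_left (Complex.exp (θ * Complex.I) * z)
  have h2 := Complex.hasSum_re h
  have hD : 0 < 1 - 2 * x * Real.cos y + x ^ 2 := by
    nlinarith [Real.cos_le_one y]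
  convert h2 using 1
  · funext n
    have : Complex.exp (θ * Complex.I) * z * z ^ n =
        ((x ^ (n + 1) : ℝ) : ℂ) * Complex.exp (((((n : ℝ) + 1) * y + θ : ℝ) : ℂ) * Complex.I) := by
      rw [hz, mul_assoc, ← pow_succ', mul_pow, ← Complex.exp_nat_mul, mul_left_comm,
        ← Complex.exp_add]
      push_cast
      congr 2
      ring
    rw [this, Complex.re_ofReal_mul, Complex.exp_ofReal_mul_I_re, mul_comm]
  · have hz1 : z = ⟨x * Real.cos y, x * Real.sin y⟩ := by
      rw [hz, hexp]; apply Complex.ext <;> simp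
    have hns : Complex.normSq (1 - z) = 1 - 2 * x * Real.cos y + x ^ 2 := by
      rw [hz1, Complex.normSq_apply]; simp
      nlinarith [Real.sin_sq_add_cos_sq y]
    rw [Complex.mul_re, Complex.inv_re, Complex.inv_im, hns, hexp, hz1]
    simp
    rw [Real.cos_add]
    linear_combination (x ^ 2 * Real.cos θ / (1 - 2 * x * Real.cos y + x ^ 2)) *
      Real.sin_sq_add_cos_sq y

/-- The sum of `cos (n y + θ) / n ^ s` is negative when `cos (y + θ) ≤ 0`. -/
lemma aux_neg_of_cos_nonpos (y θ s A : ℝ) (hs : 1 < s) (hθ : 0 < Real.cos θ)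
    (hy : Real.cos (y + θ) ≤ 0)
    (hA : HasSum (fun n : ℕ => Real.cos (((n : ℝ) + 1) * y + θ) / ((n : ℝ) + 1) ^ s) A) :
    A < 0 := by
  set ε := Real.cos θ / 4 with hε
  let e : ℕ → ℝ := fun n => if n = 1 then ε else 0
  have hA2 : HasSum (fun n : ℕ => (Real.cos (((n : ℝ) + 1) * y + θ) + e n) / ((n : ℝ) + 1) ^ s)
      (A + ε / 2 ^ s) := by
    have : HasSum (fun n : ℕ => e n / ((n : ℝ) + 1) ^ s) (ε / 2 ^ s) := by
      convert hasSum_single (f := fun n : ℕ => e n / ((n : ℝ) + 1) ^ s) 1 (fun n hn => by simp [e, hn])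
        using 1
      simp [e]; norm_num
    simpa [add_div] using hA.add this
  have := aux_mellin_nonpos _ (1 + ε) (fun n => by
    refine (abs_add_le _ _).trans (add_le_add (Real.abs_cos_le_one _) ?_)
    simp only [e]; split_ifs
    · rw [abs_of_pos]; positivity
    · simp; positivity) s hs (fun t => (Real.exp (-t) * Real.cos (y + θ) -
        Real.exp (-t) ^ 2 * Real.cos θ) / (1 - 2 * Real.exp (-t) * Real.cos y + Real.exp (-t) ^ 2)
        + ε * Real.exp (-t) ^ 2) (fun t ht => by
      have hx : Real.exp (-t) < 1 := by simpa using ht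
      have hx0 := Real.exp_pos (-t)
      set x := Real.exp (-t)
      have hD : 0 < 1 - 2 * x * Real.cos y + x ^ 2 := by
        nlinarith [Real.cos_le_one y]
      have hD4 : 1 - 2 * x * Real.cos y + x ^ 2 ≤ 4 := by
        nlinarith [Real.neg_one_le_cos y]
      rw [div_add' _ _ _ hD.ne']
      apply div_nonpos_of_nonpos_of_nonneg _ hD.le
      have h1 : x * Real.cos (y + θ) ≤ 0 := mul_nonpos_of_nonneg_of_nonpos hx0.le hy
      have h2 : ε * x ^ 2 * (1 - 2 * x * Real.cos y + x ^ 2) ≤ ε * x ^ 2 * 4 := by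
        gcongr
      rw [hε] at h2 ⊢
      linarith) (fun t ht => by
      have hx : Real.exp (-t) < 1 := by simpa using ht
      have h1 := aux_geom_s10 (Real.exp (-t)) y θ (Real.exp_pos _) hx
      have h2 : HasSum (fun n : ℕ => e n * Real.exp (-t) ^ (n + 1)) (ε * Real.exp (-t) ^ 2) := by
        convert hasSum_single (f := fun n : ℕ => e n * Real.exp (-t) ^ (n + 1)) 1
          (fun n hn => by simp [e, hn]) using 1
        simp [e]
      convert h1.add h2 using 2 with n
      rw [← Real.exp_nat_mul, ← add_mul]
      congr 2
      push_cast; ring) _ hA2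
  have : 0 < ε / 2 ^ s := by positivity
  linarith

lemma aux_log_step (n : ℕ) (hn : 4 ≤ n) :
    Real.log ((n : ℝ) + 1) / ((n : ℝ) + 1) ^ 2 ≤
      (1 + Real.log n) / n - (1 + Real.log ((n : ℝ) + 1)) / ((n : ℝ) + 1) := by
  have hn' : (4 : ℝ) ≤ n := by exact_mod_cast hn
  have hn0 : (0 : ℝ) < n := by linarith
  have h1 : Real.log ((n : ℝ) + 1) - 1 / n ≤ Real.log n := by
    have h := Real.log_le_sub_one_of_pos (show 0 < ((n : ℝ) + 1) / n by positivity)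
    rw [Real.log_div (by positivity) (by positivity)] at h
    have : ((n : ℝ) + 1) / n - 1 = 1 / n := by field_simp; ring
    linarith
  have h2 : (1.25 : ℝ) ≤ Real.log ((n : ℝ) + 1) := by
    have h3 : Real.log 4 ≤ Real.log ((n : ℝ) + 1) := Real.log_le_log (by norm_num) (by linarith)
    have h4 : Real.log 4 = 2 * Real.log 2 := by
      rw [show (4 : ℝ) = 2 ^ 2 by norm_num, Real.log_pow]; norm_num
    linarith [Real.log_two_gt_d9]
  set L := Real.log ((n : ℝ) + 1)
  have h5 : (1 + (L - 1 / n)) / n ≤ (1 + Real.log n) / n := by gcongr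
  have h6 : (1 + (L - 1 / n)) / n - (1 + L) / ((n : ℝ) + 1) - L / ((n : ℝ) + 1) ^ 2 =
      (L * n - (n + 1)) / (n ^ 2 * ((n : ℝ) + 1) ^ 2) := by
    field_simp; ring
  have h7 : 0 ≤ (L * n - (n + 1)) / ((n : ℝ) ^ 2 * ((n : ℝ) + 1) ^ 2) := by
    apply div_nonneg _ (by positivity)
    nlinarith
  linarith

/-- Bound for `C(2 + δ) - C(2)`. -/
lemma aux_C_bound (y δ C C2 : ℝ) (hδ : 0 < δ) (hy : 3 * Real.pi / 8 ≤ y) (hy2 : y ≤ Real.pi / 2)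
    (hC : HasSum (fun n : ℕ => Real.cos (n * y) / (n : ℝ) ^ (2 + δ)) C)
    (hC2 : HasSum (fun n : ℕ => Real.cos (n * y) / (n : ℝ) ^ (2 : ℝ)) C2) :
    C - C2 ≤ δ * 0.9 := by
  have h := hC.sub hC2
  set f : ℕ → ℝ := fun n => Real.cos (n * y) / (n : ℝ) ^ (2 + δ) -
    Real.cos (n * y) / (n : ℝ) ^ (2 : ℝ) with hf
  have hdiff : ∀ n : ℕ, 1 ≤ n → 0 ≤ 1 / (n : ℝ) ^ (2 : ℝ) - 1 / (n : ℝ) ^ (2 + δ) ∧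
      1 / (n : ℝ) ^ (2 : ℝ) - 1 / (n : ℝ) ^ (2 + δ) ≤ δ * (Real.log n / (n : ℝ) ^ 2) := by
    intro n hn
    have hn' : (1 : ℝ) ≤ n := by exact_mod_cast hn
    have hn0 : (0 : ℝ) < n := by linarith
    rw [Real.rpow_add hn0]
    have e1 : 1 / (n : ℝ) ^ (2 : ℝ) - 1 / ((n : ℝ) ^ (2 : ℝ) * (n : ℝ) ^ δ) =
      (1 - ((n : ℝ) ^ δ)⁻¹) / (n : ℝ) ^ (2 : ℝ) := by
      have : 0 < (n : ℝ) ^ δ := by positivity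
      field_simp
    rw [e1, ← Real.rpow_neg hn0.le]
    have e2 : (n : ℝ) ^ (-δ) ≤ 1 := Real.rpow_le_one_of_one_le_of_nonpos hn' (by linarith)
    have e3 : 1 - δ * Real.log n ≤ (n : ℝ) ^ (-δ) := by
      rw [Real.rpow_def_of_pos hn0]
      linarith [Real.add_one_le_exp (Real.log n * (-δ))]
    constructor
    · apply div_nonneg (by linarith) (by positivity)
    · rw [← mul_div_assoc, Real.rpow_two]
      gcongr
      linarith
  have hfn : ∀ n : ℕ, f n = -Real.cos (n * y) *
      (1 / (n : ℝ) ^ (2 : ℝ) - 1 / (n : ℝ) ^ (2 + δ)) := by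
    intro n; simp only [hf]; ring
  have hfb : ∀ n : ℕ, 1 ≤ n → f n ≤ δ * (Real.log n / (n : ℝ) ^ 2) := by
    intro n hn
    obtain ⟨h1, h2⟩ := hdiff n hn
    rw [hfn]
    nlinarith [Real.neg_one_le_cos (n * y)]
  have hf4 : f 4 ≤ 0 := by
    rw [hfn]
    have := (hdiff 4 (by norm_num)).1
    have hc : 0 ≤ Real.cos ((4 : ℕ) * y) := by
      rw [← Real.cos_sub_two_pi]
      apply Real.cos_nonneg_of_neg_pi_div_two_le_of_le <;> push_cast <;> linarith [Real.pi_pos]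
    exact mul_nonpos_of_nonpos_of_nonneg (by linarith) this
  have hf0 : f 0 = 0 := by
    simp only [hf]; simp
    rw [Real.zero_rpow (by linarith)]
    try simp
  have hf1 : f 1 ≤ 0 := by simpa using hfb 1 le_rfl
  have hl3 : Real.log 3 ≤ 1.103 := by
    have h9 : Real.log 9 = 2 * Real.log 3 := by
      rw [show (9 : ℝ) = 3 ^ 2 by norm_num, Real.log_pow]; norm_num
    have h8 : Real.log 8 = 3 * Real.log 2 := by
      rw [show (8 : ℝ) = 2 ^ 3 by norm_num, Real.log_pow]; norm_num
    have := Real.log_le_sub_one_of_pos (show (0 : ℝ) < 9 / 8 by norm_num)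
    rw [Real.log_div (by norm_num) (by norm_num)] at this
    linarith [Real.log_two_lt_d9]
  have hpart : ∀ N : ℕ, 4 ≤ N → ∑ n ∈ Finset.range (N + 1), f n ≤
      δ * (0.9 - (1 + Real.log N) / N) := by
    intro N hN
    induction N, hN using Nat.le_induction with
    | base =>
      have h2 := hfb 2 (by norm_num)
      have h3 := hfb 3 (by norm_num)
      have h4 : Real.log 4 = 2 * Real.log 2 := by
        rw [show (4 : ℝ) = 2 ^ 2 by norm_num, Real.log_pow]; norm_num
      simp only [Finset.sum_range_succ, Finset.sum_range_zero]
      push_cast at h2 h3 ⊢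
      rw [h4]
      have : δ * (Real.log 2 / 2 ^ 2) + δ * (Real.log 3 / 3 ^ 2) ≤
          δ * (0.9 - (1 + 2 * Real.log 2) / 4) := by
        rw [← mul_add]
        gcongr
        linarith [Real.log_two_lt_d9]
      linarith
    | succ N hN ih =>
      rw [Finset.sum_range_succ]
      have h1 := hfb (N + 1) (by omega)
      have h2 := mul_le_mul_of_nonneg_left (aux_log_step N hN) hδ.le
      push_cast at h1 ⊢
      linarith
  refine le_of_tendsto ((Filter.tendsto_add_atTop_iff_nat 1).mpr h.tendsto_sum_nat) ?_
  filter_upwards [Filter.eventually_ge_atTop 4] with N hN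
  refine (hpart N hN).trans ?_
  gcongr
  have : 0 ≤ Real.log N := Real.log_natCast_nonneg N
  have : 0 ≤ (1 + Real.log N) / N := by positivity
  linarith

lemma aux_S_bound (y s S : ℝ) (hs : 2 ≤ s) (hy : 1.327 ≤ y) (hy2 : y ≤ Real.pi / 2)
    (hS : HasSum (fun n : ℕ => Real.sin (n * y) / (n : ℝ) ^ s) S) :
    0.6 ≤ S := by
  set f : ℕ → ℝ := fun n => Real.sin (n * y) / (n : ℝ) ^ s with hf
  have hp1 := Real.pi_gt_d4
  have hp2 := Real.pi_lt_d4
  have hpow : ∀ n : ℕ, 1 ≤ n → 1 / (n : ℝ) ^ s ≤ 1 / (n : ℝ) ^ 2 := by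
    intro n hn
    have hn' : (1 : ℝ) ≤ n := by exact_mod_cast hn
    rw [← Real.rpow_two]
    gcongr
  have hfb : ∀ n : ℕ, 1 ≤ n → -(1 / (n : ℝ) ^ 2) ≤ f n := by
    intro n hn
    have h1 := hpow n hn
    have h0 : 0 ≤ 1 / (n : ℝ) ^ s := by positivity
    have : f n = Real.sin (n * y) * (1 / (n : ℝ) ^ s) := by simp only [hf]; ring
    rw [this]
    nlinarith [Real.neg_one_le_sin (n * y)]
  have hf0 : f 0 = 0 := by simp [hf]
  have hf1 : 0.97 ≤ f 1 := by
    simp only [hf]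
    simp
    have h := Real.one_sub_sq_div_two_le_cos (x := Real.pi / 2 - y)
    rw [Real.cos_pi_div_two_sub] at h
    nlinarith
  have hf2 : 0 ≤ f 2 := by
    apply div_nonneg _ (by positivity)
    apply Real.sin_nonneg_of_nonneg_of_le_pi <;> push_cast <;> linarith
  have hf5 : 0 ≤ f 5 := by
    apply div_nonneg _ (by positivity)
    rw [← Real.sin_sub_two_pi]
    apply Real.sin_nonneg_of_nonneg_of_le_pi <;> push_cast <;> linarith
  have hf6 : 0 ≤ f 6 := by
    apply div_nonneg _ (by positivity)
    rw [← Real.sin_sub_two_pi]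
    apply Real.sin_nonneg_of_nonneg_of_le_pi <;> push_cast <;> linarith
  have hpart : ∀ N : ℕ, 6 ≤ N → 0.6 + 1 / (N : ℝ) ≤ ∑ n ∈ Finset.range (N + 1), f n := by
    intro N hN
    induction N, hN using Nat.le_induction with
    | base =>
      have h3 := hfb 3 (by norm_num)
      have h4 := hfb 4 (by norm_num)
      simp only [Finset.sum_range_succ, Finset.sum_range_zero]
      norm_num at h3 h4 hf1 ⊢
      linarith
    | succ N hN ih =>
      rw [Finset.sum_range_succ]
      have h1 := hfb (N + 1) (by omega)
      have hN0 : (0 : ℝ) < N := by exact_mod_cast (by omega : 0 < N)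
      have h2 : 1 / (N : ℝ) - 1 / ((N : ℝ) + 1) - 1 / ((N : ℝ) + 1) ^ 2 =
          1 / (N * ((N : ℝ) + 1) ^ 2) := by field_simp; ring
      have h3 : 0 ≤ 1 / (N * ((N : ℝ) + 1) ^ 2) := by positivity
      push_cast at h1 ⊢
      linarith
  refine ge_of_tendsto ((Filter.tendsto_add_atTop_iff_nat 1).mpr hS.tendsto_sum_nat) ?_
  filter_upwards [Filter.eventually_ge_atTop 6] with N hN
  refine le_trans ?_ (hpart N hN)
  have : 0 ≤ 1 / (N : ℝ) := by positivity
  linarith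
/-- Sign of `cos θ * C - sin θ * S`. -/
lemma aux_main (y δ C S : ℝ) (hδ : 0 < δ) (hδ1 : δ < 1) (hy0 : 1.327 ≤ y) (hyπ : y ≤ Real.pi)
    (hC : HasSum (fun n : ℕ => Real.cos (n * y) / (n : ℝ) ^ (2 + δ)) C)
    (hS : HasSum (fun n : ℕ => Real.sin (n * y) / (n : ℝ) ^ (2 + δ)) S)
    (C2 : ℝ) (hC2 : HasSum (fun n : ℕ => Real.cos (n * y) / (n : ℝ) ^ (2 : ℝ)) C2)
    (hC20 : C2 ≤ 0) :
    Real.cos (Real.pi * δ / 2) * C - Real.sin (Real.pi * δ / 2) * S < 0 := by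
  have hp1 := Real.pi_gt_d4
  have hp2 := Real.pi_lt_d4
  have hθ0 : 0 < Real.pi * δ / 2 := by positivity
  have hθ1 : Real.pi * δ / 2 < Real.pi / 2 := by nlinarith
  set θ := Real.pi * δ / 2 with hθ
  have hcos : 0 < Real.cos θ := Real.cos_pos_of_mem_Ioo ⟨by linarith, hθ1⟩
  by_cases hc : Real.cos (y + θ) ≤ 0
  · have h := (hC.mul_left (Real.cos θ)).sub (hS.mul_left (Real.sin θ))
    have h' := (hasSum_nat_add_iff' 1).mpr h
    have hz : (0 : ℝ) ^ (2 + δ) = 0 := Real.zero_rpow (by linarith)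
    simp only [Finset.sum_range_one, Nat.cast_zero, hz, div_zero, mul_zero, sub_zero] at h'
    refine aux_neg_of_cos_nonpos y θ (2 + δ) _ (by linarith) hcos hc ?_
    refine h'.congr_fun fun n => ?_
    rw [Real.cos_add]
    push_cast
    ring
  · have hyθ : y < Real.pi / 2 := by
      by_contra hcon
      push Not at hcon
      exact hc (Real.cos_nonpos_of_pi_div_two_le_of_le (by linarith) (by linarith))
    have h1 := aux_C_bound y δ C C2 hδ (by linarith) hyθ.le hC hC2
    have h2 := aux_S_bound y (2 + δ) S (by linarith) hy0 hyθ.le hS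
    have h3 : θ < Real.tan θ := Real.lt_tan hθ0 hθ1
    rw [Real.tan_eq_sin_div_cos, lt_div_iff₀ hcos] at h3
    have h4 : Real.cos θ * C ≤ Real.cos θ * (δ * 0.9) := by gcongr; linarith
    have h5 : θ * Real.cos θ * 0.6 ≤ Real.sin θ * S := by
      have : 0 < θ * Real.cos θ := by positivity
      nlinarith
    have h6 : δ * 0.9 < θ * 0.6 := by rw [hθ]; nlinarith
    nlinarith

open HurwitzZeta Set

/-- If `1/2 ≤ a ≤ (3 + √3)/6`, then `ζ(σ, a) > 0` for every real `σ ∈ (-2, -1)`. -/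
theorem hurwitzZeta_pos_on_Ioo_neg_two_neg_one (a : ℝ) (ha : 1 / 2 ≤ a)
    (ha' : a ≤ (3 + Real.sqrt 3) / 6) :
    ∀ σ : ℝ, -2 < σ → σ < -1 →
      (hurwitzZeta (a : UnitAddCircle) (σ : ℂ)).im = 0 ∧
        0 < (hurwitzZeta (a : UnitAddCircle) (σ : ℂ)).re := by
  intro σ hσ1 hσ2
  have hp1 := Real.pi_gt_d4
  have hp2 := Real.pi_lt_d4
  have hsq : Real.sqrt 3 ^ 2 = 3 := Real.sq_sqrt (by norm_num)
  have hsq0 := Real.sqrt_nonneg 3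
  have hsq1 : Real.sqrt 3 ≤ 1.7321 := Real.sqrt_le_iff.mpr ⟨by norm_num, by norm_num⟩
  obtain ⟨δ, hδ⟩ : ∃ δ : ℝ, δ = -1 - σ := ⟨_, rfl⟩
  have hσ : (σ : ℂ) = 1 - ((2 + δ : ℝ) : ℂ) := by rw [hδ]; push_cast; ring
  have hδ0 : 0 < δ := by linarith
  have hδ1 : δ < 1 := by linarith
  have hre : 1 < (((2 + δ : ℝ) : ℂ)).re := by rw [Complex.ofReal_re]; linarith
  have hpow : ∀ n : ℕ, ((n : ℂ)) ^ (((2 + δ : ℝ) : ℂ)) = (((n : ℝ) ^ (2 + δ) : ℝ) : ℂ) := by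
    intro n
    rw [Complex.ofReal_cpow (Nat.cast_nonneg n), Complex.ofReal_natCast]
  obtain ⟨y, hy⟩ : ∃ y : ℝ, y = 2 * Real.pi * (1 - a) := ⟨_, rfl⟩
  have hcosn : ∀ n : ℕ, Real.cos (2 * Real.pi * a * n) = Real.cos (n * y) := by
    intro n
    rw [← Real.cos_nat_mul_two_pi_sub _ n, hy]; congr 1; ring
  have hsinn : ∀ n : ℕ, Real.sin (2 * Real.pi * a * n) = -Real.sin (n * y) := by
    intro n
    rw [← Real.sin_nat_mul_two_pi_sub _ n, hy]; congr 1; ring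
  have hCs := hasSum_nat_cosZeta a hre
  have hSs := hasSum_nat_sinZeta a hre
  simp only [hpow, hcosn, hsinn, ← Complex.ofReal_div] at hCs hSs
  obtain ⟨C, hC⟩ : ∃ C : ℝ, HasSum (fun n : ℕ => Real.cos (n * y) / (n : ℝ) ^ (2 + δ)) C := by
    have := Complex.hasSum_re hCs
    simp only [Complex.ofReal_re] at this
    exact ⟨_, this⟩
  obtain ⟨S, hS⟩ : ∃ S : ℝ, HasSum (fun n : ℕ => Real.sin (n * y) / (n : ℝ) ^ (2 + δ)) S := by
    have := (Complex.hasSum_re hSs).neg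
    simp only [Complex.ofReal_re, neg_div, neg_neg] at this
    exact ⟨_, this⟩
  have hCeq := hCs.unique (Complex.hasSum_ofReal.mpr hC)
  have hSeq : sinZeta a ((2 + δ : ℝ) : ℂ) = ((-S : ℝ) : ℂ) := by
    refine hSs.unique (Complex.hasSum_ofReal.mpr ?_)
    simpa [neg_div] using hS.neg
  have ha1 : a ∈ Icc (0 : ℝ) 1 := ⟨by linarith, by linarith⟩
  have hC2 := hasSum_one_div_nat_pow_mul_cos one_ne_zero ha1
  have hB : (Polynomial.map (algebraMap ℚ ℝ) (Polynomial.bernoulli (2 * 1))).eval a =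
      a ^ 2 - a + 1 / 6 := by
    rw [mul_one, Polynomial.bernoulli_def]
    simp [Finset.sum_range_succ, bernoulli_two, bernoulli_one]
    ring
  rw [hB] at hC2
  have hmain := aux_main y δ C S hδ0 hδ1 (by rw [hy]; nlinarith) (by rw [hy]; nlinarith) hC hS _
    (by
      convert hC2 using 2 with n
      rw [show 2 * Real.pi * (n : ℝ) * a = 2 * Real.pi * a * n by ring, hcosn, Real.rpow_two]
      ring)
    (by
      have hBn : a ^ 2 - a + 1 / 6 ≤ 0 := by nlinarith
      refine mul_nonpos_of_nonneg_of_nonpos ?_ hBn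
      norm_num
      positivity)
  have hne : ∀ n : ℕ, ((2 + δ : ℝ) : ℂ) ≠ -n := by
    intro n h
    have h' := congrArg Complex.re h
    simp at h'
    have : (0 : ℝ) ≤ n := Nat.cast_nonneg n
    linarith
  have hne1 : ((2 + δ : ℝ) : ℂ) ≠ 1 := by
    intro h
    have h' := congrArg Complex.re h
    simp at h'
    linarith
  have hval : hurwitzZeta (a : UnitAddCircle) (σ : ℂ) =
      ((2 * (2 * Real.pi) ^ (-(2 + δ)) * Real.Gamma (2 + δ) *
        -(Real.cos (Real.pi * δ / 2) * C - Real.sin (Real.pi * δ / 2) * S) : ℝ) : ℂ) := by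
    rw [hurwitzZeta, hσ, hurwitzZetaEven_one_sub _ hne (Or.inr hne1), hurwitzZetaOdd_one_sub _ hne,
      hCeq, hSeq]
    have e1 : Complex.cos (Real.pi * ((2 + δ : ℝ) : ℂ) / 2) =
        ((-Real.cos (Real.pi * δ / 2) : ℝ) : ℂ) := by
      rw [← Real.cos_add_pi]; push_cast; congr 1; ring
    have e2 : Complex.sin (Real.pi * ((2 + δ : ℝ) : ℂ) / 2) =
        ((-Real.sin (Real.pi * δ / 2) : ℝ) : ℂ) := by
      rw [← Real.sin_add_pi]; push_cast; congr 1; ring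
    have e3 : (2 * (Real.pi : ℂ)) ^ (-((2 + δ : ℝ) : ℂ)) =
        (((2 * Real.pi) ^ (-(2 + δ)) : ℝ) : ℂ) := by
      rw [Complex.ofReal_cpow (by positivity)]; push_cast; rfl
    rw [e1, e2, e3, Complex.Gamma_ofReal]
    push_cast
    ring
  rw [hval]
  refine ⟨Complex.ofReal_im _, ?_⟩
  rw [Complex.ofReal_re]
  have hG := Real.Gamma_pos_of_pos (show 0 < 2 + δ by linarith)
  have : 0 < -(Real.cos (Real.pi * δ / 2) * C - Real.sin (Real.pi * δ / 2) * S) := by linarith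
  positivity
end

section
/- Let b₄⁻ ∈ [0, 1/2) be the root of the fourth Bernoulli polynomial B₄ in that interval, and suppose b₄⁻ ≤ a ≤ 1/2. Then ζ(σ, a) < 0 for every real σ with −3 < σ < −2. -/
open HurwitzZeta Polynomial Set

/-- The `n`-th Bernoulli polynomial evaluated at a real number. -/
noncomputable def bernoulliPoly (n : ℕ) (x : ℝ) : ℝ := Polynomial.aeval x (Polynomial.bernoulli n)

lemma bern4 (x : ℝ) : bernoulliPoly 4 x = x ^ 4 - 2 * x ^ 3 + x ^ 2 - 1 / 30 := by
  have h3 : _root_.bernoulli 3 = 0 := by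
    rw [bernoulli_eq_bernoulli'_of_ne_one (by norm_num), bernoulli'_three]
  have h4 : _root_.bernoulli 4 = -1 / 30 := by
    rw [bernoulli_eq_bernoulli'_of_ne_one (by norm_num), bernoulli'_four]
  have h2 : _root_.bernoulli 2 = 1 / 6 := by
    rw [bernoulli_eq_bernoulli'_of_ne_one (by norm_num), bernoulli'_two]
  have c2 : Nat.choose 4 2 = 6 := by decide
  simp only [bernoulliPoly, Polynomial.bernoulli, Finset.sum_range_succ, Finset.sum_range_zero,
    map_add, Polynomial.aeval_monomial, h2, h3, h4, _root_.bernoulli_zero, _root_.bernoulli_one, c2]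
  norm_num
  ring

lemma abs_sin_nat_mul_le' (t : ℝ) (n : ℕ) : |Real.sin (t * n)| ≤ n * |Real.sin t| := by
  induction n with
  | zero => simp
  | succ k ih =>
    push_cast
    rw [mul_add, mul_one, Real.sin_add]
    have h1 := abs_add_le (Real.sin (t * k) * Real.cos t) (Real.cos (t * k) * Real.sin t)
    rw [abs_mul, abs_mul] at h1
    have h2 := Real.abs_cos_le_one t
    have h3 := Real.abs_cos_le_one (t * k)
    have := mul_le_mul_of_nonneg_left h2 (abs_nonneg (Real.sin (t * k)))
    have := mul_le_mul_of_nonneg_right h3 (abs_nonneg (Real.sin t))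
    linarith

lemma real_cos (a s : ℝ) (hs : 1 < s) : ∃ C : ℝ, cosZeta a (s : ℂ) = C ∧
    HasSum (fun n : ℕ ↦ Real.cos (2 * Real.pi * a * n) / (n : ℝ) ^ s) C := by
  have h := hasSum_nat_cosZeta a (s := (s : ℂ)) (by simpa using hs)
  have e : (fun n : ℕ ↦ (Real.cos (2 * Real.pi * a * n) : ℂ) / (n : ℂ) ^ (s : ℂ)) =
      fun n : ℕ ↦ ((Real.cos (2 * Real.pi * a * n) / (n : ℝ) ^ s : ℝ) : ℂ) := by
    funext n
    rw [Complex.ofReal_div, Complex.ofReal_cpow (Nat.cast_nonneg n)]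
    simp
  rw [e] at h
  have h2 := Complex.hasSum_re h
  simp only [Complex.ofReal_re] at h2
  exact ⟨_, h.unique (Complex.hasSum_ofReal.mpr h2), h2⟩

lemma real_sin (a s : ℝ) (hs : 1 < s) : ∃ S : ℝ, sinZeta a (s : ℂ) = S ∧
    HasSum (fun n : ℕ ↦ Real.sin (2 * Real.pi * a * n) / (n : ℝ) ^ s) S := by
  have h := hasSum_nat_sinZeta a (s := (s : ℂ)) (by simpa using hs)
  have e : (fun n : ℕ ↦ (Real.sin (2 * Real.pi * a * n) : ℂ) / (n : ℂ) ^ (s : ℂ)) =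
      fun n : ℕ ↦ ((Real.sin (2 * Real.pi * a * n) / (n : ℝ) ^ s : ℝ) : ℂ) := by
    funext n
    rw [Complex.ofReal_div, Complex.ofReal_cpow (Nat.cast_nonneg n)]
    simp
  rw [e] at h
  have h2 := Complex.hasSum_re h
  simp only [Complex.ofReal_re] at h2
  exact ⟨_, h.unique (Complex.hasSum_ofReal.mpr h2), h2⟩

lemma pow3_le (s : ℝ) (hs : 3 < s) (n : ℕ) (hn : 1 ≤ n) : (n : ℝ) ^ 3 ≤ (n : ℝ) ^ s := by
  rw [← Real.rpow_natCast (n : ℝ) 3]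
  exact Real.rpow_le_rpow_of_exponent_le (by exact_mod_cast hn) (by push_cast; linarith)

lemma inv_rpow_le (s : ℝ) (hs : 3 < s) (n : ℕ) (hn : 2 ≤ n) :
    1 / (n : ℝ) ^ s ≤ 1 / 2 * (1 / (n : ℝ) ^ 2) := by
  have h := pow3_le s hs n (by omega)
  have hn' : (2 : ℝ) ≤ n := by exact_mod_cast hn
  have : 2 * (n : ℝ) ^ 2 ≤ (n : ℝ) ^ s := by nlinarith [sq_nonneg (n : ℝ)]
  rw [one_div_mul_one_div]
  exact one_div_le_one_div_of_le (by positivity) this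

lemma hasSum_one : HasSum (fun n : ℕ ↦ if n = 1 then (1 : ℝ) else 0) 1 := hasSum_ite_eq 1 1

lemma C_le (a s C : ℝ) (hs : 3 < s)
    (h : HasSum (fun n : ℕ ↦ Real.cos (2 * Real.pi * a * n) / (n : ℝ) ^ s) C) :
    C ≤ Real.cos (2 * Real.pi * a) + 1 / 2 * (Real.pi ^ 2 / 6 - 1) := by
  have hg := (hasSum_one.mul_left (Real.cos (2 * Real.pi * a))).add
    ((hasSum_zeta_two.sub hasSum_one).mul_left (1 / 2))
  rw [mul_one] at hg
  refine hasSum_le (fun n ↦ ?_) h hg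
  rcases Nat.lt_or_ge n 2 with hn | hn
  · interval_cases n
    · simp [Real.zero_rpow (by linarith : s ≠ 0)]
    · simp
  · have h1 := inv_rpow_le s hs n hn
    have h2 : Real.cos (2 * Real.pi * a * n) / (n : ℝ) ^ s ≤ 1 / (n : ℝ) ^ s := by
      gcongr
      exact Real.cos_le_one _
    simp only [if_neg (by omega : ¬ n = 1)]
    linarith

lemma S_ge (a s S : ℝ) (hs : 3 < s) (hx : 0 ≤ Real.sin (2 * Real.pi * a))
    (h : HasSum (fun n : ℕ ↦ Real.sin (2 * Real.pi * a * n) / (n : ℝ) ^ s) S) :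
    Real.sin (2 * Real.pi * a) * (2 - Real.pi ^ 2 / 6) ≤ S := by
  have hg := ((hasSum_one.mul_left 2).sub hasSum_zeta_two).mul_left (Real.sin (2 * Real.pi * a))
  rw [mul_one] at hg
  refine hasSum_le (fun n ↦ ?_) hg h
  rcases Nat.lt_or_ge n 2 with hn | hn
  · interval_cases n
    · simp [Real.zero_rpow (by linarith : s ≠ 0)]
    · simp; linarith
  · have h3 := pow3_le s hs n (by omega)
    have hn' : (2 : ℝ) ≤ n := by exact_mod_cast hn
    have h4 := abs_sin_nat_mul_le' (2 * Real.pi * a) n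
    rw [abs_of_nonneg hx] at h4
    have h5 := (abs_le.mp h4).1
    have hp : 0 < (n : ℝ) ^ s := lt_of_lt_of_le (by positivity) h3
    simp only [if_neg (by omega : ¬ n = 1)]
    rw [le_div_iff₀ hp]
    have h6 : (n : ℝ) ≤ 1 / (n : ℝ) ^ 2 * (n : ℝ) ^ s := by
      rw [one_div_mul_eq_div, le_div_iff₀ (by positivity)]
      linarith [show (n : ℝ) * (n : ℝ) ^ 2 = (n : ℝ) ^ 3 by ring]
    have h7 := mul_le_mul_of_nonneg_left h6 hx
    linarith

lemma C_le4 (a s C C4 : ℝ) (hs : 3 < s) (hs4 : s < 4)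
    (h : HasSum (fun n : ℕ ↦ Real.cos (2 * Real.pi * a * n) / (n : ℝ) ^ s) C)
    (h4 : HasSum (fun n : ℕ ↦ Real.cos (2 * Real.pi * a * n) / (n : ℝ) ^ 4) C4) :
    C ≤ C4 + (4 - s) * (1 / 2 * (Real.pi ^ 2 / 6 - 1)) := by
  have hg := h4.add (((hasSum_zeta_two.sub hasSum_one).mul_left (1 / 2)).mul_left (4 - s))
  refine hasSum_le (fun n ↦ ?_) h hg
  rcases Nat.lt_or_ge n 2 with hn | hn
  · interval_cases n
    · simp [Real.zero_rpow (by linarith : s ≠ 0)]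
    · simp
  · simp only [if_neg (by omega : ¬ n = 1)]
    have hn' : (2 : ℝ) ≤ n := by exact_mod_cast hn
    have hn0 : (0 : ℝ) < n := by linarith
    have hb := rpow_one_add_le_one_add_mul_self (s := (n : ℝ) - 1) (by linarith)
      (p := 4 - s) (by linarith) (by linarith)
    rw [add_sub_cancel] at hb
    have e : 1 / (n : ℝ) ^ s = (n : ℝ) ^ (4 - s) / (n : ℝ) ^ 4 := by
      rw [Real.rpow_sub hn0]
      have : (n : ℝ) ^ (4 : ℝ) = (n : ℝ) ^ 4 := by exact_mod_cast Real.rpow_natCast (n : ℝ) 4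
      rw [this]
      have := (Real.rpow_pos_of_pos hn0 s).ne'
      field_simp
    have h1 : (n : ℝ) ^ (4 - s) ≥ 1 := Real.one_le_rpow (by linarith) (by linarith)
    have hc := Real.cos_le_one (2 * Real.pi * a * n)
    rw [div_eq_mul_one_div, e]
    have key : Real.cos (2 * Real.pi * a * n) * (n : ℝ) ^ (4 - s) ≤
        Real.cos (2 * Real.pi * a * n) + (4 - s) * (1 / 2) * (n : ℝ) ^ 2 := by
      have k1 : Real.cos (2 * Real.pi * a * n) * ((n : ℝ) ^ (4 - s) - 1) ≤ (n : ℝ) ^ (4 - s) - 1 := by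
        nlinarith
      have k2 : (4 - s) * ((n : ℝ) - 1) ≤ (4 - s) * (1 / 2 * (n : ℝ) ^ 2) := by
        apply mul_le_mul_of_nonneg_left _ (by linarith)
        nlinarith
      linarith
    have e2 : Real.cos (2 * Real.pi * a * n) / (n : ℝ) ^ 4 +
        (4 - s) * (1 / 2 * (1 / (n : ℝ) ^ 2 - 0)) =
        (Real.cos (2 * Real.pi * a * n) + (4 - s) * (1 / 2) * (n : ℝ) ^ 2) / (n : ℝ) ^ 4 := by
      field_simp
      ring
    rw [e2, ← mul_div_assoc]
    gcongr

lemma C4_eq (a : ℝ) (ha : a ∈ Icc (0 : ℝ) 1) :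
    HasSum (fun n : ℕ ↦ Real.cos (2 * Real.pi * a * n) / (n : ℝ) ^ 4)
      (-((2 * Real.pi) ^ 4 / 48) * bernoulliPoly 4 a) := by
  have h := hasSum_one_div_nat_pow_mul_cos (k := 2) (by norm_num) ha
  convert! h using 1
  · funext n
    rw [show 2 * Real.pi * a * n = 2 * Real.pi * n * a by ring]
    norm_num
    ring
  · rw [Polynomial.eval_map_algebraMap]
    norm_num [bernoulliPoly, Nat.factorial]
    ring

lemma core (a δ C C4 S : ℝ) (hδ : 0 < δ) (hδ1 : δ < 1) (ha : 1 / 6 ≤ a) (ha' : a ≤ 1 / 2)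
    (h1 : C ≤ Real.cos (2 * Real.pi * a) + 1 / 2 * (Real.pi ^ 2 / 6 - 1))
    (h2 : C ≤ C4 + δ * (1 / 2 * (Real.pi ^ 2 / 6 - 1))) (h4 : C4 ≤ 0)
    (h3 : Real.sin (2 * Real.pi * a) * (2 - Real.pi ^ 2 / 6) ≤ S) :
    Real.cos (Real.pi * δ / 2) * C - Real.sin (Real.pi * δ / 2) * S < 0 := by
  have hp := Real.pi_gt_d2
  have hp' := Real.pi_lt_d2
  have hsq : Real.pi ^ 2 / 6 < 1.655 := by nlinarith
  have hx : 0 ≤ Real.sin (2 * Real.pi * a) :=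
    Real.sin_nonneg_of_nonneg_of_le_pi (by nlinarith) (by nlinarith)
  have hcp : 0 < Real.cos (Real.pi * δ / 2) :=
    Real.cos_pos_of_mem_Ioo ⟨by nlinarith, by nlinarith⟩
  have hsp : 0 < Real.sin (Real.pi * δ / 2) :=
    Real.sin_pos_of_pos_of_lt_pi (by nlinarith) (by nlinarith)
  have ht := Real.lt_tan (x := Real.pi * δ / 2) (by nlinarith) (by nlinarith)
  rw [Real.tan_eq_sin_div_cos, lt_div_iff₀ hcp] at ht
  have hS : 0.345 * Real.sin (2 * Real.pi * a) ≤ S := by nlinarith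
  have hc : Real.cos (2 * Real.pi * a) ≤ 1 / 2 := by
    rw [← Real.cos_pi_div_three]
    exact Real.cos_le_cos_of_nonneg_of_le_pi (by positivity) (by nlinarith) (by nlinarith)
  rcases lt_or_ge (Real.cos (2 * Real.pi * a)) (-1 / 2) with hlt | hge
  · have hC : C < 0 := by linarith
    have hS0 : 0 ≤ S := by linarith
    nlinarith [mul_neg_of_pos_of_neg hcp hC, mul_nonneg hsp.le hS0]
  · have hx2 : 0.86 ≤ Real.sin (2 * Real.pi * a) := by
      have := Real.sin_sq_add_cos_sq (2 * Real.pi * a)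
      nlinarith
    have hS2 : 0.29 ≤ S := by linarith
    have hC : C ≤ δ * 0.3275 := by nlinarith
    have e1 := mul_le_mul_of_nonneg_left hC hcp.le
    have e2 := mul_le_mul_of_nonneg_left hS2 hsp.le
    have e3 : 0 < δ * Real.cos (Real.pi * δ / 2) := mul_pos hδ hcp
    nlinarith

/-- With `b₄⁻ ∈ [0,1/2)` the root of `B₄` in that interval and `b₄⁻ ≤ a ≤ 1/2`,
`ζ(σ, a) < 0` for every real `σ ∈ (-3, -2)`. -/
theorem hurwitzZeta_neg_on_Ioo_neg_three_neg_two (bm : ℝ)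
    (hbm : bm ∈ Set.Ico (0 : ℝ) (1 / 2)) (hbm0 : bernoulliPoly 4 bm = 0)
    (a : ℝ) (ha : bm ≤ a) (ha' : a ≤ 1 / 2) :
    ∀ σ : ℝ, -3 < σ → σ < -2 →
      (hurwitzZeta (a : UnitAddCircle) (σ : ℂ)).im = 0 ∧
        (hurwitzZeta (a : UnitAddCircle) (σ : ℂ)).re < 0 := by
  intro σ h3 h2
  obtain ⟨hb0, hb1⟩ := hbm
  rw [bern4] at hbm0
  have hprod : bm * (1 - bm) ≤ a * (1 - a) := by nlinarith
  have hbp : 0 ≤ bm * (1 - bm) := by nlinarith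
  have hsq : (bm * (1 - bm)) ^ 2 ≤ (a * (1 - a)) ^ 2 := by gcongr
  have hB : 0 ≤ bernoulliPoly 4 a := by
    rw [bern4]; nlinarith
  have ha6 : 1 / 6 ≤ a := by
    by_contra hlt
    push Not at hlt
    have : a * (1 - a) ≤ 1 / 6 := by nlinarith
    have h0 : 0 ≤ a * (1 - a) := hbp.trans hprod
    nlinarith
  obtain ⟨C, hCe, hC⟩ := real_cos a (1 - σ) (by linarith)
  obtain ⟨S, hSe, hS⟩ := real_sin a (1 - σ) (by linarith)
  have hx : 0 ≤ Real.sin (2 * Real.pi * a) :=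
    Real.sin_nonneg_of_nonneg_of_le_pi (by have := Real.pi_pos; positivity)
      (by nlinarith [Real.pi_pos])
  have k1 := C_le a _ C (by linarith) hC
  have k3 := S_ge a _ S (by linarith) hx hS
  have k2 := C_le4 a _ C _ (by linarith) (by linarith) hC (C4_eq a ⟨by linarith, by linarith⟩)
  have hfin := core a (4 - (1 - σ)) C _ S (by linarith) (by linarith) ha6 ha' k1 k2
    (by rw [neg_mul, neg_nonpos]; positivity) k3
  have ec : Real.cos (Real.pi * (4 - (1 - σ)) / 2) = Real.cos (Real.pi * (1 - σ) / 2) := by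
    rw [show Real.pi * (4 - (1 - σ)) / 2 = 2 * Real.pi - Real.pi * (1 - σ) / 2 by ring,
      Real.cos_two_pi_sub]
  have es : Real.sin (Real.pi * (4 - (1 - σ)) / 2) = -Real.sin (Real.pi * (1 - σ) / 2) := by
    rw [show Real.pi * (4 - (1 - σ)) / 2 = 2 * Real.pi - Real.pi * (1 - σ) / 2 by ring,
      Real.sin_two_pi_sub]
  rw [ec, es] at hfin
  have hne : ∀ n : ℕ, ((1 - σ : ℝ) : ℂ) ≠ -n := by
    intro n hn
    have : (1 - σ : ℝ) = -(n : ℝ) := by exact_mod_cast hn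
    have := Nat.cast_nonneg (α := ℝ) n
    linarith
  have hne1 : ((1 - σ : ℝ) : ℂ) ≠ 1 := by
    intro hn
    have : (1 - σ : ℝ) = 1 := by exact_mod_cast hn
    linarith
  have main : hurwitzZeta (a : UnitAddCircle) (σ : ℂ) =
      ((2 * (2 * Real.pi) ^ (-(1 - σ)) * Real.Gamma (1 - σ) *
        (Real.cos (Real.pi * (1 - σ) / 2) * C + Real.sin (Real.pi * (1 - σ) / 2) * S) : ℝ) : ℂ) := by
    have e : (σ : ℂ) = 1 - ((1 - σ : ℝ) : ℂ) := by push_cast; ring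
    rw [e, hurwitzZeta, hurwitzZetaEven_one_sub _ hne (Or.inr hne1), hurwitzZetaOdd_one_sub _ hne,
      hCe, hSe, Complex.Gamma_ofReal]
    have e2 : (2 * (Real.pi : ℂ)) ^ (-((1 - σ : ℝ) : ℂ)) =
        (((2 * Real.pi) ^ (-(1 - σ)) : ℝ) : ℂ) := by
      rw [Complex.ofReal_cpow (by have := Real.pi_pos; positivity)]
      push_cast
      rfl
    rw [e2]
    push_cast
    ring
  rw [main]
  refine ⟨Complex.ofReal_im _, ?_⟩
  rw [Complex.ofReal_re]
  have hG := Real.Gamma_pos_of_pos (s := 1 - σ) (by linarith)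
  have hP : 0 < (2 * Real.pi) ^ (-(1 - σ)) := Real.rpow_pos_of_pos (by have := Real.pi_pos; positivity) _
  exact mul_neg_of_pos_of_neg (by positivity) (by linarith)
end

section
/- Let b₄⁺ ∈ [1/2, 1) be the root of the fourth Bernoulli polynomial B₄ in that interval, and suppose b₄⁺ ≤ a ≤ 1. Then ζ(σ, a) > 0 for every real σ with −3 < σ < −2. -/
open HurwitzZeta Polynomial Set

lemma aux_abs_sin_nat (n : ℕ) (x : ℝ) : |Real.sin (x * n)| ≤ n * |Real.sin x| := by
  induction n with
  | zero => simp
  | succ k ih =>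
    have h : x * ((k + 1 : ℕ) : ℝ) = x * k + x := by push_cast; ring
    rw [h, Real.sin_add]
    have h1 := abs_add_le (Real.sin (x * k) * Real.cos x) (Real.cos (x * k) * Real.sin x)
    rw [abs_mul, abs_mul] at h1
    have h2 := Real.abs_cos_le_one x
    have h3 := Real.abs_cos_le_one (x * k)
    have h4 := abs_nonneg (Real.sin x)
    have h5 := abs_nonneg (Real.sin (x * k))
    push_cast
    nlinarith

/-- `1 / n ^ 2` with the term `n = 1` removed. -/
noncomputable def auxE (n : ℕ) : ℝ := 1 / (n : ℝ) ^ 2 - if n = 1 then 1 else 0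

lemma aux_hasSum_one (c : ℝ) : HasSum (fun n : ℕ => if n = 1 then c else 0) c :=
  hasSum_ite_eq 1 c

lemma auxE_hasSum : HasSum auxE (Real.pi ^ 2 / 6 - 1) :=
  hasSum_zeta_two.sub (aux_hasSum_one 1)

lemma auxE_of_two_le {n : ℕ} (hn : 2 ≤ n) : auxE n = 1 / (n : ℝ) ^ 2 := by
  have : n ≠ 1 := by omega
  simp [auxE, this]

lemma aux_inv_rpow_le {n : ℕ} (hn : 2 ≤ n) {s : ℝ} (hs : 3 < s) :
    1 / (n : ℝ) ^ s ≤ 1 / (n : ℝ) ^ 3 := by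
  have h2 : (2 : ℝ) ≤ n := by exact_mod_cast hn
  apply one_div_le_one_div_of_le (by positivity)
  rw [← Real.rpow_natCast]
  apply Real.rpow_le_rpow_of_exponent_le (by linarith)
  push_cast; linarith

lemma aux_inv_cube {n : ℕ} (hn : 2 ≤ n) : 1 / (n : ℝ) ^ 3 ≤ (1 / (n : ℝ) ^ 2) / 2 := by
  have h2 : (2 : ℝ) ≤ n := by exact_mod_cast hn
  rw [div_div]
  apply one_div_le_one_div_of_le (by positivity)
  nlinarith [sq_nonneg (n : ℝ)]

lemma aux_diff {n : ℕ} (hn : 2 ≤ n) {s : ℝ} (hs : 3 < s) (hs4 : s < 4) :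
    |1 / (n : ℝ) ^ s - 1 / (n : ℝ) ^ 4| ≤ (4 - s) * (1 / (n : ℝ) ^ 3) := by
  have h2 : (2 : ℝ) ≤ n := by exact_mod_cast hn
  have h0 : (0 : ℝ) < n := by linarith
  have e : 1 / (n : ℝ) ^ s = (n : ℝ) ^ (4 - s) * (1 / (n : ℝ) ^ 4) := by
    rw [Real.rpow_sub h0, show ((n : ℝ) ^ (4 : ℝ)) = (n : ℝ) ^ 4 by
      rw [← Real.rpow_natCast]; norm_num]
    field_simp
  have b := rpow_one_add_le_one_add_mul_self (s := (n : ℝ) - 1) (p := 4 - s)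
    (by linarith) (by linarith) (by linarith)
  rw [show (1 : ℝ) + (n - 1) = n by ring] at b
  have l : 1 ≤ (n : ℝ) ^ (4 - s) := Real.one_le_rpow (by linarith) (by linarith)
  have p : (0 : ℝ) < 1 / (n : ℝ) ^ 4 := by positivity
  have q : 1 / (n : ℝ) ^ 3 = n * (1 / (n : ℝ) ^ 4) := by field_simp
  rw [e, q, abs_of_nonneg (by nlinarith)]
  have : (n : ℝ) ^ (4 - s) - 1 ≤ (4 - s) * n := by nlinarith
  nlinarith

lemma aux_C1 {x s C : ℝ} (hs : 3 < s)
    (hC : HasSum (fun n : ℕ => Real.cos (x * n) / (n : ℝ) ^ s) C) :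
    Real.cos x - (Real.pi ^ 2 / 6 - 1) / 2 ≤ C := by
  refine hasSum_le ?_ ((aux_hasSum_one (Real.cos x)).sub (auxE_hasSum.div_const 2)) hC
  intro n
  rcases Nat.lt_or_ge n 2 with h | h
  · interval_cases n
    · simp [auxE, Real.zero_rpow (by linarith : s ≠ 0)]
    · simp [auxE]
  · have h1 : n ≠ 1 := by omega
    have := aux_inv_rpow_le h hs
    have := aux_inv_cube h
    have hp : 0 ≤ 1 / (n : ℝ) ^ s := by positivity
    have := Real.neg_one_le_cos (x * n)
    simp only [h1, if_false, auxE_of_two_le h]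
    rw [div_eq_mul_one_div (Real.cos _)]
    nlinarith

lemma aux_S {x s S : ℝ} (hs : 3 < s) (hx : Real.sin x ≤ 0)
    (hS : HasSum (fun n : ℕ => Real.sin (x * n) / (n : ℝ) ^ s) S) :
    S ≤ Real.sin x - Real.sin x * (Real.pi ^ 2 / 6 - 1) := by
  refine hasSum_le ?_ hS ((aux_hasSum_one (Real.sin x)).sub (auxE_hasSum.mul_left (Real.sin x)))
  intro n
  rcases Nat.lt_or_ge n 2 with h | h
  · interval_cases n
    · simp [auxE]
    · simp [auxE]
  · have h1 : n ≠ 1 := by omega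
    have a1 := aux_inv_rpow_le h hs
    have hp : 0 ≤ 1 / (n : ℝ) ^ s := by positivity
    have a2 := (le_abs_self _).trans (aux_abs_sin_nat n x)
    rw [abs_of_nonpos hx] at a2
    simp only [h1, if_false, auxE_of_two_le h]
    rw [div_eq_mul_one_div (Real.sin _)]
    have h0 : (n : ℝ) ≠ 0 := by positivity
    have q : 1 / (n : ℝ) ^ 2 = n * (1 / (n : ℝ) ^ 3) := by field_simp
    have hn : (0 : ℝ) ≤ n * -Real.sin x := mul_nonneg (by positivity) (by linarith)
    rw [q]
    calc _ ≤ (n * -Real.sin x) * (1 / (n : ℝ) ^ s) := mul_le_mul_of_nonneg_right a2 hp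
      _ ≤ (n * -Real.sin x) * (1 / (n : ℝ) ^ 3) := mul_le_mul_of_nonneg_left a1 hn
      _ = _ := by ring

lemma aux_C2 {x s C D : ℝ} (hs : 3 < s) (hs4 : s < 4)
    (hC : HasSum (fun n : ℕ => Real.cos (x * n) / (n : ℝ) ^ s) C)
    (hD : HasSum (fun n : ℕ => 1 / (n : ℝ) ^ 4 * Real.cos (x * n)) D) :
    D - (4 - s) * ((Real.pi ^ 2 / 6 - 1) / 2) ≤ C := by
  refine hasSum_le ?_ (hD.sub ((auxE_hasSum.div_const 2).mul_left (4 - s))) hC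
  intro n
  rcases Nat.lt_or_ge n 2 with h | h
  · interval_cases n
    · simp [auxE, Real.zero_rpow (by linarith : s ≠ 0)]
    · simp [auxE]
  · have a1 := aux_diff h hs hs4
    have a2 := aux_inv_cube h
    have a3 := Real.abs_cos_le_one (x * n)
    have a4 : |(1 / (n : ℝ) ^ s - 1 / (n : ℝ) ^ 4) * Real.cos (x * n)| ≤
        (4 - s) * (1 / (n : ℝ) ^ 3) := by
      rw [abs_mul]
      exact (mul_le_of_le_one_right (abs_nonneg _) a3).trans a1
    have a5 := (abs_le.mp a4).1
    have a6 := mul_le_mul_of_nonneg_left a2 (by linarith : 0 ≤ 4 - s)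
    rw [auxE_of_two_le h, div_eq_mul_one_div (Real.cos _)]
    linarith

lemma aux_bern (x : ℝ) : bernoulliPoly 4 x = (x * (1 - x)) ^ 2 - 1 / 30 := by
  have b1 : _root_.bernoulli 1 = -1 / 2 := by rw [_root_.bernoulli_one]
  have b2 : _root_.bernoulli 2 = 1 / 6 := by
    rw [bernoulli_eq_bernoulli'_of_ne_one (by decide), bernoulli'_two]
  have b3 : _root_.bernoulli 3 = 0 := by
    rw [bernoulli_eq_bernoulli'_of_ne_one (by decide), bernoulli'_three]
  have b4 : _root_.bernoulli 4 = -1 / 30 := by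
    rw [bernoulli_eq_bernoulli'_of_ne_one (by decide), bernoulli'_four]
  have c2 : Nat.choose 4 2 = 6 := by decide
  simp [bernoulliPoly, Polynomial.bernoulli, Finset.sum_range_succ, b1, b2, b3, b4, c2,
    Polynomial.aeval_monomial]
  ring

set_option maxHeartbeats 1600000 in
lemma aux_real {a s C S : ℝ} (ha : 1 / 2 ≤ a) (ha' : a ≤ 1) (hB : bernoulliPoly 4 a ≤ 0)
    (hs : 3 < s) (hs4 : s < 4)
    (hC : HasSum (fun n : ℕ => Real.cos (2 * Real.pi * a * n) / (n : ℝ) ^ s) C)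
    (hS : HasSum (fun n : ℕ => Real.sin (2 * Real.pi * a * n) / (n : ℝ) ^ s) S) :
    0 < Real.cos (Real.pi * s / 2) * C + Real.sin (Real.pi * s / 2) * S := by
  have hpi := Real.pi_pos
  have p1 := Real.pi_gt_three
  have p2 := Real.pi_lt_d2
  have hE : Real.pi ^ 2 / 6 - 1 ≤ 0.654 := by nlinarith
  have hE0 : 0 ≤ Real.pi ^ 2 / 6 - 1 := by nlinarith
  have hD : HasSum (fun n : ℕ => 1 / (n : ℝ) ^ 4 * Real.cos (2 * Real.pi * a * n))
      ((2 * Real.pi) ^ 4 / 2 / 24 * -bernoulliPoly 4 a) := by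
    have := hasSum_one_div_nat_pow_mul_cos (k := 2) (by norm_num) (x := a) ⟨by linarith, ha'⟩
    convert! this using 1
    · ext n
      rw [show 2 * Real.pi * a * n = 2 * Real.pi * n * a by ring]
    · rw [Polynomial.eval_map_algebraMap, bernoulliPoly]
      norm_num [Nat.factorial]
      ring
  have hD0 : 0 ≤ (2 * Real.pi) ^ 4 / 2 / 24 * -bernoulliPoly 4 a :=
    mul_nonneg (by positivity) (by linarith)
  have hsin : Real.sin (2 * Real.pi * a) ≤ 0 := by
    have h1 : 0 ≤ Real.sin (2 * Real.pi * a - Real.pi) :=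
      Real.sin_nonneg_of_nonneg_of_le_pi (by nlinarith) (by nlinarith)
    rw [Real.sin_sub_pi] at h1
    linarith
  have k1 := aux_C1 hs hC
  have k2 := aux_C2 hs hs4 hC hD
  have k3 := aux_S hs hsin hS
  set x := 2 * Real.pi * a
  set E := Real.pi ^ 2 / 6 - 1
  set t := Real.pi * (4 - s) / 2 with ht
  have ec : Real.cos (Real.pi * s / 2) = Real.cos t := by
    rw [show Real.pi * s / 2 = 2 * Real.pi - t by rw [ht]; ring, Real.cos_two_pi_sub]
  have es : Real.sin (Real.pi * s / 2) = -Real.sin t := by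
    rw [show Real.pi * s / 2 = 2 * Real.pi - t by rw [ht]; ring, Real.sin_two_pi_sub]
  rw [ec, es]
  have t0 : 0 < t := by rw [ht]; apply div_pos (mul_pos hpi (by linarith)) (by norm_num)
  have t1 : t < Real.pi / 2 := by rw [ht]; nlinarith
  have hc : 0 < Real.cos t := Real.cos_pos_of_mem_Ioo ⟨by linarith, t1⟩
  have htan := Real.lt_tan t0 t1
  rw [Real.tan_eq_sin_div_cos, lt_div_iff₀ hc] at htan
  have hd : 0 < Real.sin t := lt_trans (mul_pos t0 hc) htan
  have hS0 : S ≤ Real.sin x * 0.346 := by nlinarith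
  rcases lt_or_ge (1 / 3) (Real.cos x) with h | h
  · have : 0 < C := by linarith
    have : S ≤ 0 := by nlinarith
    nlinarith [mul_pos hc ‹0 < C›]
  · rcases lt_or_ge 0 C with hC0 | hC0
    · have : S ≤ 0 := by nlinarith
      nlinarith [mul_pos hc hC0]
    have ha3 : 3 / 4 ≤ a := by
      by_contra hcon
      push Not at hcon
      rw [aux_bern] at hB
      have : 3 / 16 ≤ a * (1 - a) := by nlinarith
      nlinarith
    have hcx : 0 ≤ Real.cos x := by
      rw [← Real.cos_sub_two_pi]
      apply Real.cos_nonneg_of_neg_pi_div_two_le_of_le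
      · change _ ≤ 2 * Real.pi * a - _
        nlinarith
      · change 2 * Real.pi * a - _ ≤ _
        nlinarith
    have hsx : Real.sin x ≤ -0.94 := by
      have h3 := Real.sin_sq_add_cos_sq x
      have h4 : Real.cos x ^ 2 ≤ 1 / 9 := by
        have := mul_le_mul h h hcx (by norm_num)
        linarith [sq (Real.cos x)]
      by_contra hcon
      push Not at hcon
      have h5 : Real.sin x ^ 2 ≤ 0.94 ^ 2 := sq_le_sq' (by linarith) (by linarith)
      norm_num at h5
      linarith
    have hS1 : S ≤ -0.325 := by linarith
    have q0 : 0 < Real.cos t * (4 - s) := mul_pos hc (by linarith)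
    have q1 : -(Real.cos t * (4 - s)) * 0.327 ≤ Real.cos t * C := by
      have h5 := mul_le_mul_of_nonneg_left hE (by linarith : 0 ≤ 4 - s)
      have h6 : -(4 - s) * 0.327 ≤ C := by linarith
      have h7 := mul_le_mul_of_nonneg_left h6 hc.le
      linarith
    have q2 : Real.cos t * (4 - s) * 1.5 ≤ Real.sin t := by
      have h5 := mul_le_mul_of_nonneg_left p1.le q0.le
      have h6 : t * Real.cos t = Real.cos t * (4 - s) * Real.pi / 2 := by rw [ht]; ring
      linarith
    have q3 := mul_le_mul_of_nonneg_left hS1 hd.le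
    linarith

theorem hurwitzZeta_pos_on_Ioo_neg_three_neg_two (bp : ℝ)
    (hbp : bp ∈ Set.Ico (1 / 2 : ℝ) 1) (hbp0 : bernoulliPoly 4 bp = 0)
    (a : ℝ) (ha : bp ≤ a) (ha' : a ≤ 1) :
    ∀ σ : ℝ, -3 < σ → σ < -2 →
      (hurwitzZeta (a : UnitAddCircle) (σ : ℂ)).im = 0 ∧
        0 < (hurwitzZeta (a : UnitAddCircle) (σ : ℂ)).re := by
  intro σ h1 h2
  obtain ⟨s, rfl⟩ : ∃ s : ℝ, σ = 1 - s := ⟨1 - σ, by ring⟩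
  have hs : 3 < s := by linarith
  have hs4 : s < 4 := by linarith
  have hB : bernoulliPoly 4 a ≤ 0 := by
    rw [aux_bern] at hbp0 ⊢
    have e1 : a * (1 - a) ≤ bp * (1 - bp) := by nlinarith [hbp.1]
    have e2 : 0 ≤ a * (1 - a) := mul_nonneg (by linarith [hbp.1]) (by linarith)
    nlinarith
  have hre : 1 < (s : ℂ).re := by simp; linarith
  have hC := hasSum_nat_cosZeta a hre
  have hS := hasSum_nat_sinZeta a hre
  have eC : (fun n : ℕ ↦ (Real.cos (2 * Real.pi * a * n) : ℂ) / (n : ℂ) ^ (s : ℂ)) =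
      fun n : ℕ ↦ ((Real.cos (2 * Real.pi * a * n) / (n : ℝ) ^ s : ℝ) : ℂ) := by
    ext n
    rw [Complex.ofReal_div, Complex.ofReal_cpow (Nat.cast_nonneg n), Complex.ofReal_natCast]
  have eS : (fun n : ℕ ↦ (Real.sin (2 * Real.pi * a * n) : ℂ) / (n : ℂ) ^ (s : ℂ)) =
      fun n : ℕ ↦ ((Real.sin (2 * Real.pi * a * n) / (n : ℝ) ^ s : ℝ) : ℂ) := by
    ext n
    rw [Complex.ofReal_div, Complex.ofReal_cpow (Nat.cast_nonneg n), Complex.ofReal_natCast]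
  rw [eC] at hC
  rw [eS] at hS
  have zC := Complex.hasSum_re hC
  have zS := Complex.hasSum_re hS
  simp only [Complex.ofReal_re] at zC zS
  have key := aux_real (hbp.1.trans ha) ha' hB hs hs4 zC zS
  have uC := hC.unique (Complex.hasSum_ofReal.mpr zC)
  have uS := hS.unique (Complex.hasSum_ofReal.mpr zS)
  have hneg : ∀ n : ℕ, (s : ℂ) ≠ -n := by
    intro n hn
    have := congrArg Complex.re hn
    simp at this
    have h0 : (0 : ℝ) ≤ n := Nat.cast_nonneg n
    linarith
  have hne : (s : ℂ) ≠ 1 := by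
    intro hn
    have := congrArg Complex.re hn
    simp at this
    linarith
  set C := (cosZeta (a : UnitAddCircle) (s : ℂ)).re
  set S := (sinZeta (a : UnitAddCircle) (s : ℂ)).re
  have main : hurwitzZeta (a : UnitAddCircle) ((1 - s : ℝ) : ℂ) =
      ((2 * (2 * Real.pi) ^ (-s) * Real.Gamma s *
        (Real.cos (Real.pi * s / 2) * C + Real.sin (Real.pi * s / 2) * S) : ℝ) : ℂ) := by
    rw [Complex.ofReal_sub, Complex.ofReal_one, hurwitzZeta,
      hurwitzZetaEven_one_sub _ hneg (Or.inr hne), hurwitzZetaOdd_one_sub _ hneg, uC, uS,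
      Complex.Gamma_ofReal]
    have hp : (((2 * Real.pi) ^ (-s) : ℝ) : ℂ) = (2 * (Real.pi : ℂ)) ^ (-(s : ℂ)) := by
      rw [Complex.ofReal_cpow (by positivity)]
      push_cast
      rfl
    rw [← hp]
    push_cast
    ring
  rw [main]
  refine ⟨Complex.ofReal_im _, ?_⟩
  rw [Complex.ofReal_re]
  have hG : 0 < Real.Gamma s := Real.Gamma_pos_of_pos (by linarith)
  have hP : 0 < (2 * Real.pi) ^ (-s) := Real.rpow_pos_of_pos (by positivity) _
  positivity
end

section
/- Let 0 < a ≤ 1 and let M ≥ 2 be an integer. Then the Hurwitz zeta function σ ↦ ζ(σ, a) has exactly one real zero in the interval [−2M−2, −2M). -/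
open HurwitzZeta Set

/-- Tail estimate against `ζ(4) - 1 ≤ 1/10`. -/
lemma aux_tail {f : ℕ → ℝ} {S K : ℝ} (hf : HasSum f S) (hK : 0 ≤ K) (h0 : f 0 = 0)
    (h : ∀ n : ℕ, 2 ≤ n → |f n| ≤ K * (1 / (n : ℝ) ^ 4)) : |S - f 1| ≤ K / 10 := by
  have h1 : HasSum (fun n => if n = 1 then f 1 else 0) (f 1) := hasSum_ite_eq 1 (f 1)
  have h2 := hf.sub h1
  have h3 : HasSum (fun n : ℕ => if n = 1 then K else 0) K := hasSum_ite_eq 1 K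
  have h4 := (hasSum_zeta_four.mul_left K).sub h3
  have hle : ∀ n : ℕ, |f n - (if n = 1 then f 1 else 0)| ≤
      K * (1 / (n : ℝ) ^ 4) - (if n = 1 then K else 0) := by
    intro n
    rcases n with _ | _ | n
    · simp [h0]
    · simp
    · simpa using h (n + 1 + 1) (by omega)
  have h5 : |S - f 1| ≤ K * (Real.pi ^ 4 / 90) - K := by
    rw [abs_le]
    constructor
    · exact hasSum_le (fun n => (abs_le.1 (hle n)).1) h4.neg h2
    · exact hasSum_le (fun n => (abs_le.1 (hle n)).2) h2 h4
  have h6 : Real.pi ^ 4 ≤ 99 := by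
    have : Real.pi ^ 4 ≤ 3.15 ^ 4 := by
      gcongr
      exact Real.pi_lt_d2.le
    norm_num at this ⊢
    linarith
  have h7 : K * (Real.pi ^ 4 / 90) ≤ K * (99 / 90) := by gcongr
  linarith

lemma aux_cos (a : ℝ) {s : ℝ} (hs : 1 < s) :
    HasSum (fun n : ℕ => Real.cos (2 * Real.pi * a * n) / (n : ℝ) ^ s)
      (cosZeta (a : UnitAddCircle) (s : ℂ)).re ∧ 
      ((cosZeta (a : UnitAddCircle) (s : ℂ)).re : ℂ) = cosZeta (a : UnitAddCircle) (s : ℂ) := by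
  have h := hasSum_nat_cosZeta a (s := (s : ℂ)) (by simpa using hs)
  have e : (fun n : ℕ => (Real.cos (2 * Real.pi * a * n) : ℂ) / (n : ℂ) ^ (s : ℂ)) =
      fun n : ℕ => ((Real.cos (2 * Real.pi * a * n) / (n : ℝ) ^ s : ℝ) : ℂ) := by
    ext n
    rw [Complex.ofReal_div, Complex.ofReal_cpow (by positivity)]
    simp
  rw [e] at h
  refine ⟨by simpa only [Complex.ofReal_re] using Complex.hasSum_re h, ?_⟩
  apply Complex.ext
  · simp
  · have := Complex.hasSum_im h
    simp only [Complex.ofReal_im] at this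
    simpa using (hasSum_zero.unique this)

lemma aux_sin (a : ℝ) {s : ℝ} (hs : 1 < s) :
    HasSum (fun n : ℕ => Real.sin (2 * Real.pi * a * n) / (n : ℝ) ^ s)
      (sinZeta (a : UnitAddCircle) (s : ℂ)).re ∧ 
      ((sinZeta (a : UnitAddCircle) (s : ℂ)).re : ℂ) = sinZeta (a : UnitAddCircle) (s : ℂ) := by
  have h := hasSum_nat_sinZeta a (s := (s : ℂ)) (by simpa using hs)
  have e : (fun n : ℕ => (Real.sin (2 * Real.pi * a * n) : ℂ) / (n : ℂ) ^ (s : ℂ)) =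
      fun n : ℕ => ((Real.sin (2 * Real.pi * a * n) / (n : ℝ) ^ s : ℝ) : ℂ) := by
    ext n
    rw [Complex.ofReal_div, Complex.ofReal_cpow (by positivity)]
    simp
  rw [e] at h
  refine ⟨by simpa only [Complex.ofReal_re] using Complex.hasSum_re h, ?_⟩
  apply Complex.ext
  · simp
  · have := Complex.hasSum_im h
    simp only [Complex.ofReal_im] at this
    simpa using (hasSum_zero.unique this)

lemma aux_abs_sin (x : ℝ) (n : ℕ) : |Real.sin (x * n)| ≤ n * |Real.sin x| := by
  induction n with
  | zero => simp
  | succ n ih =>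
    have : x * ((n + 1 : ℕ) : ℝ) = x * n + x := by push_cast; ring
    rw [this, Real.sin_add]
    refine (abs_add_le _ _).trans ?_
    rw [abs_mul, abs_mul]
    have h1 := mul_le_of_le_one_right (abs_nonneg (Real.sin (x * n))) (Real.abs_cos_le_one x)
    have h2 := mul_le_of_le_one_left (abs_nonneg (Real.sin x)) (Real.abs_cos_le_one (x * n))
    push_cast
    linarith

lemma aux_rpow {n : ℕ} (hn : 2 ≤ n) {s : ℝ} (hs : 5 ≤ s) :
    (n : ℝ) / (n : ℝ) ^ s ≤ 1 / (n : ℝ) ^ 4 := by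
  have hn1 : (1 : ℝ) ≤ n := by exact_mod_cast (by omega : 1 ≤ n)
  have h : (n : ℝ) ^ 5 ≤ (n : ℝ) ^ s := by
    rw [← Real.rpow_natCast]
    exact Real.rpow_le_rpow_of_exponent_le hn1 (by simpa using hs)
  rw [div_le_div_iff₀ (by positivity) (by positivity)]
  calc (n : ℝ) * n ^ 4 = n ^ 5 := by ring
    _ ≤ _ := by linarith

lemma aux_lip {n : ℕ} (hn : 2 ≤ n) {s t : ℝ} (hs : 5 ≤ s) (hst : s ≤ t) {c : ℝ} (hc : |c| ≤ 1) :
    |c / (n : ℝ) ^ t - c / (n : ℝ) ^ s| ≤ (t - s) * (1 / (n : ℝ) ^ 4) := by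
  have hn1 : (1 : ℝ) ≤ n := by exact_mod_cast (by omega : 1 ≤ n)
  have hn0 : (0 : ℝ) < n := by linarith
  have e : c / (n : ℝ) ^ t - c / (n : ℝ) ^ s =
      -(c * ((1 - (n : ℝ) ^ (-(t - s))) / (n : ℝ) ^ s)) := by
    have h1 : (n : ℝ) ^ (-(t - s)) = (n : ℝ) ^ s / (n : ℝ) ^ t := by
      rw [← Real.rpow_sub hn0]; congr 1; ring
    have h2 : (n : ℝ) ^ s ≠ 0 := by positivity
    have h3 : (n : ℝ) ^ t ≠ 0 := by positivity
    rw [h1]; field_simp; ring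
  have h0 : 0 ≤ 1 - (n : ℝ) ^ (-(t - s)) := by
    have := Real.rpow_le_one_of_one_le_of_nonpos hn1 (by linarith : -(t - s) ≤ 0)
    linarith
  have h1 : 1 - (n : ℝ) ^ (-(t - s)) ≤ (t - s) * n := by
    rw [Real.rpow_def_of_pos hn0]
    have h2 := Real.add_one_le_exp (Real.log n * -(t - s))
    have h3 := Real.log_le_sub_one_of_pos hn0
    nlinarith
  rw [e, abs_neg, abs_mul, abs_of_nonneg (a := _ / _) (by positivity)]
  calc |c| * ((1 - (n : ℝ) ^ (-(t - s))) / (n : ℝ) ^ s)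
      ≤ 1 * ((1 - (n : ℝ) ^ (-(t - s))) / (n : ℝ) ^ s) := by gcongr
    _ ≤ ((t - s) * n) / (n : ℝ) ^ s := by rw [one_mul]; gcongr
    _ = (t - s) * (n / (n : ℝ) ^ s) := by ring
    _ ≤ _ := by
      have := aux_rpow hn hs
      have : 0 ≤ t - s := by linarith
      gcongr

lemma aux_cos_near (a : ℝ) {s : ℝ} (hs : 5 ≤ s) :
    |(cosZeta (a : UnitAddCircle) (s : ℂ)).re - Real.cos (2 * Real.pi * a)| ≤ 1 / 10 := by
  have := aux_tail (aux_cos a (by linarith : 1 < s)).1 zero_le_one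
    (by simp [Real.zero_rpow (by linarith : s ≠ 0)]) (fun n hn => ?_)
  · simpa using this
  · have hn1 : (1 : ℝ) ≤ n := by exact_mod_cast (by omega : 1 ≤ n)
    rw [abs_div, abs_of_nonneg (a := (n : ℝ) ^ s) (by positivity), one_mul]
    refine le_trans ?_ (aux_rpow hn hs)
    gcongr
    exact (Real.abs_cos_le_one _).trans hn1

lemma aux_sin_near (a : ℝ) {s : ℝ} (hs : 5 ≤ s) :
    |(sinZeta (a : UnitAddCircle) (s : ℂ)).re - Real.sin (2 * Real.pi * a)| ≤
      |Real.sin (2 * Real.pi * a)| / 10 := by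
  have := aux_tail (aux_sin a (by linarith : 1 < s)).1 (abs_nonneg (Real.sin (2 * Real.pi * a)))
    (by simp) (fun n hn => ?_)
  · simpa using this
  · have hn1 : (1 : ℝ) ≤ n := by exact_mod_cast (by omega : 1 ≤ n)
    rw [abs_div, abs_of_nonneg (a := (n : ℝ) ^ s) (by positivity)]
    calc _ ≤ (n * |Real.sin (2 * Real.pi * a)|) / (n : ℝ) ^ s := by
          gcongr
          exact aux_abs_sin _ _
      _ = |Real.sin (2 * Real.pi * a)| * (n / (n : ℝ) ^ s) := by ring
      _ ≤ _ := by
        have := aux_rpow hn hs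
        gcongr

lemma aux_cos_lip (a : ℝ) {s t : ℝ} (hs : 5 ≤ s) (hst : s ≤ t) :
    |(cosZeta (a : UnitAddCircle) (t : ℂ)).re - (cosZeta (a : UnitAddCircle) (s : ℂ)).re| ≤
      (t - s) / 10 := by
  have := aux_tail ((aux_cos a (by linarith : 1 < t)).1.sub (aux_cos a (by linarith : 1 < s)).1)
    (by linarith : 0 ≤ t - s)
    (by simp [Real.zero_rpow (by linarith : s ≠ 0), Real.zero_rpow (by linarith : t ≠ 0)])
    (fun n hn => aux_lip hn hs hst (Real.abs_cos_le_one _))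
  simpa using this

lemma aux_sin_lip (a : ℝ) {s t : ℝ} (hs : 5 ≤ s) (hst : s ≤ t) :
    |(sinZeta (a : UnitAddCircle) (t : ℂ)).re - (sinZeta (a : UnitAddCircle) (s : ℂ)).re| ≤
      (t - s) / 10 := by
  have := aux_tail ((aux_sin a (by linarith : 1 < t)).1.sub (aux_sin a (by linarith : 1 < s)).1)
    (by linarith : 0 ≤ t - s) (by simp)
    (fun n hn => aux_lip hn hs hst (Real.abs_sin_le_one _))
  simpa using this

/-- The functional equation, as a criterion for real zeros. -/
lemma aux_zero_iff (a : ℝ) {s : ℝ} (hs : 5 ≤ s) :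
    hurwitzZeta (a : UnitAddCircle) ((1 - s : ℝ) : ℂ) = 0 ↔
      Real.cos (Real.pi * s / 2) * (cosZeta (a : UnitAddCircle) (s : ℂ)).re +
      Real.sin (Real.pi * s / 2) * (sinZeta (a : UnitAddCircle) (s : ℂ)).re = 0 := by
  have h1 : ∀ n : ℕ, (s : ℂ) ≠ -n := by
    intro n h
    have h' : s = -n := by exact_mod_cast h
    have : (0 : ℝ) ≤ n := by positivity
    linarith
  have h2 : (s : ℂ) ≠ 1 := by
    intro h
    have h' : s = 1 := by exact_mod_cast h
    linarith
  have h3 : (2 * (2 * (Real.pi : ℂ)) ^ (-(s : ℂ)) * Complex.Gamma s) ≠ 0 := by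
    refine mul_ne_zero (mul_ne_zero two_ne_zero ?_) (Complex.Gamma_ne_zero h1)
    simp [Complex.cpow_eq_zero_iff, Real.pi_ne_zero]
  rw [hurwitzZeta, Complex.ofReal_sub, Complex.ofReal_one, hurwitzZetaEven_one_sub _ h1 (Or.inr h2),
    hurwitzZetaOdd_one_sub _ h1, ← (aux_cos a (by linarith : 1 < s)).2,
    ← (aux_sin a (by linarith : 1 < s)).2, mul_assoc, mul_assoc _ (Complex.sin _), ← mul_add,
    mul_eq_zero, or_iff_right h3]
  exact_mod_cast Iff.rfl

set_option maxHeartbeats 1000000 in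
/-- The trigonometric core of uniqueness. -/
lemma aux_core {c s A₁ B₁ A₂ B₂ x y : ℝ} (hcs : s ^ 2 + c ^ 2 = 1) (hs : s ≠ 0)
    (hA₁ : |A₁ - s| ≤ |s| / 10) (hA₂ : |A₂ - s| ≤ |s| / 10)
    (hB₁ : |B₁ - c| ≤ 1 / 10) (hB₂ : |B₂ - c| ≤ 1 / 10)
    (hA : |A₂ - A₁| ≤ (y - x) / 10) (hB : |B₂ - B₁| ≤ (y - x) / 10)
    (hx : 0 < x) (hxy : x < y) (hy : y < 2)
    (h₁ : A₁ * Real.cos (Real.pi * x / 2) - B₁ * Real.sin (Real.pi * x / 2) = 0)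
    (h₂ : A₂ * Real.cos (Real.pi * y / 2) - B₂ * Real.sin (Real.pi * y / 2) = 0) : False := by
  have hpi := Real.pi_pos
  have sx : 0 < Real.sin (Real.pi * x / 2) := Real.sin_pos_of_pos_of_lt_pi (by positivity) (by nlinarith)
  have sy : 0 < Real.sin (Real.pi * y / 2) :=
    Real.sin_pos_of_pos_of_lt_pi (by have : 0 < y := by linarith
                                     positivity) (by nlinarith)
  have px := Real.sin_sq_add_cos_sq (Real.pi * x / 2)
  have py := Real.sin_sq_add_cos_sq (Real.pi * y / 2)
  have ed : Real.pi * (y - x) / 2 = Real.pi * y / 2 - Real.pi * x / 2 := by ring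
  have esin := Real.sin_sub (Real.pi * y / 2) (Real.pi * x / 2)
  rw [← ed] at esin
  have ecos := Real.cos_sub (Real.pi * y / 2) (Real.pi * x / 2)
  rw [← ed] at ecos
  generalize Real.sin (Real.pi * x / 2) = p at *
  generalize Real.cos (Real.pi * x / 2) = q at *
  generalize Real.sin (Real.pi * y / 2) = u at *
  generalize Real.cos (Real.pi * y / 2) = v at *
  obtain ⟨r₁, e1, e2⟩ : ∃ r, A₁ = r * p ∧ B₁ = r * q :=
    ⟨A₁ * p + B₁ * q, by linear_combination (-A₁) * px + q * h₁,
      by linear_combination (-B₁) * px - p * h₁⟩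
  obtain ⟨r₂, f1, f2⟩ : ∃ r, A₂ = r * u ∧ B₂ = r * v :=
    ⟨A₂ * u + B₂ * v, by linear_combination (-A₂) * py + v * h₂,
      by linear_combination (-B₂) * py - u * h₂⟩
  have k1 : r₁ ^ 2 = A₁ ^ 2 + B₁ ^ 2 := by rw [e1, e2]; linear_combination (-r₁ ^ 2) * px
  have k2 : r₂ ^ 2 = A₂ ^ 2 + B₂ ^ 2 := by rw [f1, f2]; linear_combination (-r₂ ^ 2) * py
  have hspos : 0 < |s| := abs_pos.2 hs
  have hs2 : |s| ^ 2 = s ^ 2 := sq_abs s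
  have sA : ∀ A : ℝ, |A - s| ≤ |s| / 10 → 9 / 10 * s ^ 2 ≤ A * s := by
    intro A h
    have h' : |(A - s) * s| ≤ |s| / 10 * |s| := by rw [abs_mul]; gcongr
    have := (abs_le.1 h').1
    nlinarith
  have a1 := sA _ hA₁
  have a2 := sA _ hA₂
  have hs2pos : 0 < s ^ 2 := by positivity
  -- `A₁ A₂ ≥ 0.81 s²`
  have a12 : 81 / 100 * s ^ 2 ≤ A₁ * A₂ := by
    have : (9 / 10 * s ^ 2) * (9 / 10 * s ^ 2) ≤ (A₁ * s) * (A₂ * s) :=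
      mul_le_mul a1 a2 (by positivity) (by linarith)
    have : s ^ 2 * (81 / 100 * s ^ 2) ≤ s ^ 2 * (A₁ * A₂) := by
      linear_combination this
    exact le_of_mul_le_mul_left this hs2pos
  have a22 : 81 / 100 * s ^ 2 ≤ A₂ ^ 2 := by
    have : (9 / 10 * s ^ 2) * (9 / 10 * s ^ 2) ≤ (A₂ * s) * (A₂ * s) :=
      mul_le_mul a2 a2 (by positivity) (by linarith)
    have : s ^ 2 * (81 / 100 * s ^ 2) ≤ s ^ 2 * (A₂ ^ 2) := by
      linear_combination this
    exact le_of_mul_le_mul_left this hs2pos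
  obtain ⟨b1l, b1u⟩ := abs_le.1 hB₁
  obtain ⟨b2l, b2u⟩ := abs_le.1 hB₂
  have c0 : |c| ≤ 1 := abs_le_one_iff_mul_self_le_one.2 (by linarith [sq_nonneg s, sq c])
  have b12 : c ^ 2 - 3 / 10 ≤ B₁ * B₂ := by
    have t1 : |c * (B₁ - c)| ≤ 1 * (1 / 10) := by
      rw [abs_mul]; exact mul_le_mul c0 hB₁ (abs_nonneg _) zero_le_one
    have t2 : |c * (B₂ - c)| ≤ 1 * (1 / 10) := by
      rw [abs_mul]; exact mul_le_mul c0 hB₂ (abs_nonneg _) zero_le_one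
    have t3 : |(B₁ - c) * (B₂ - c)| ≤ (1 / 10) * (1 / 10) := by
      rw [abs_mul]; exact mul_le_mul hB₁ hB₂ (abs_nonneg _) (by norm_num)
    have v1 := (abs_le.1 t1).1
    have v2 := (abs_le.1 t2).1
    have v3 := (abs_le.1 t3).1
    linear_combination v1 + v2 + v3
  have b22 : c ^ 2 - 3 / 10 ≤ B₂ ^ 2 := by
    have t2 : |c * (B₂ - c)| ≤ 1 * (1 / 10) := by
      rw [abs_mul]; exact mul_le_mul c0 hB₂ (abs_nonneg _) zero_le_one
    have v2 := (abs_le.1 t2).1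
    linear_combination 2 * v2 + sq_nonneg (B₂ - c)
  have r2sq : 1 / 2 ≤ r₂ ^ 2 := by rw [k2]; linarith [sq_nonneg c]
  have r12 : 0 < r₁ * r₂ := by
    have h : 0 < (r₁ * r₂) * (p * u) := by
      have : (r₁ * r₂) * (p * u) = A₁ * A₂ := by rw [e1, f1]; ring
      rw [this]; linarith
    exact pos_of_mul_pos_left h (by positivity)
  have dot : A₁ * A₂ + B₁ * B₂ = r₁ * r₂ * Real.cos (Real.pi * (y - x) / 2) := by
    rw [ecos, e1, e2, f1, f2]; ring
  have crs : A₂ * B₁ - A₁ * B₂ = r₁ * r₂ * Real.sin (Real.pi * (y - x) / 2) := by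
    rw [esin, e1, e2, f1, f2]; ring
  have hcos : 0 < Real.cos (Real.pi * (y - x) / 2) := by
    have : 0 < r₁ * r₂ * Real.cos (Real.pi * (y - x) / 2) := by rw [← dot]; linarith [sq_nonneg c]
    exact pos_of_mul_pos_right this r12.le
  have hd1 : y - x < 1 := by
    by_contra! h
    have w1 := mul_le_mul_of_nonneg_left h hpi.le
    have w2 := mul_le_mul_of_nonneg_left (by linarith : y - x ≤ 2) hpi.le
    have := Real.cos_nonpos_of_pi_div_two_le_of_le (x := Real.pi * (y - x) / 2)
      (by linarith) (by linarith)
    linarith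
  have hsin : y - x ≤ Real.sin (Real.pi * (y - x) / 2) := by
    have w1 := mul_le_mul_of_nonneg_left hd1.le hpi.le
    have := Real.mul_le_sin (x := Real.pi * (y - x) / 2)
      (by have : 0 < y - x := by linarith
          positivity) (by linarith)
    have e : 2 / Real.pi * (Real.pi * (y - x) / 2) = y - x := by field_simp
    linarith
  have low : r₁ * r₂ * (y - x) ≤ A₂ * B₁ - A₁ * B₂ := by rw [crs]; gcongr
  have hA1 : |A₁| ≤ |r₁| := by
    apply sq_le_sq.1; linarith [sq_nonneg B₁]
  have hB1 : |B₁| ≤ |r₁| := by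
    apply sq_le_sq.1; linarith [sq_nonneg A₁]
  have up : A₂ * B₁ - A₁ * B₂ ≤ |r₁| * ((y - x) / 5) := by
    have e : A₂ * B₁ - A₁ * B₂ = B₁ * (A₂ - A₁) - A₁ * (B₂ - B₁) := by ring
    have t1 : |B₁ * (A₂ - A₁)| ≤ |r₁| * ((y - x) / 10) := by rw [abs_mul]; gcongr
    have t2 : |A₁ * (B₂ - B₁)| ≤ |r₁| * ((y - x) / 10) := by rw [abs_mul]; gcongr
    have := (abs_le.1 t1).2
    have := (abs_le.1 t2).1
    linarith
  have r12' : r₁ * r₂ = |r₁| * |r₂| := by rw [← abs_mul, abs_of_pos r12]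
  have hr1 : 0 < |r₁| := abs_pos.2 (by rintro rfl; simp at r12)
  have hd : 0 < y - x := by linarith
  have fin1 : (|r₁| * (y - x)) * |r₂| ≤ (|r₁| * (y - x)) * (1 / 5) := by
    rw [r12'] at low; linarith
  have fin2 := le_of_mul_le_mul_left fin1 (by positivity)
  have fin3 : |r₂| ^ 2 ≤ (1 / 5) ^ 2 := pow_le_pow_left₀ (abs_nonneg r₂) fin2 2
  rw [sq_abs] at fin3
  norm_num at fin3
  linarith

/-- For `0 < a ≤ 1` and an integer `M ≥ 2`, the Hurwitz zeta function `σ ↦ ζ(σ, a)` has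
exactly one real zero in the interval `[-2M-2, -2M)`. -/
theorem hurwitzZeta_exactly_one_zero_in_Ico (a : ℝ) (ha : 0 < a) (ha' : a ≤ 1)
    (M : ℤ) (hM : 2 ≤ M) :
    ∃! σ : ℝ, σ ∈ Set.Ico (-2 * (M : ℝ) - 2) (-2 * (M : ℝ)) ∧
      hurwitzZeta (a : UnitAddCircle) (σ : ℂ) = 0 := by
  have hM' : (2 : ℝ) ≤ M := by exact_mod_cast hM
  have hpi := Real.pi_pos
  set A : ℝ → ℝ := fun t => (sinZeta (a : UnitAddCircle) ((2 * M + 1 + t : ℝ) : ℂ)).re with hAdef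
  set B : ℝ → ℝ := fun t => (cosZeta (a : UnitAddCircle) ((2 * M + 1 + t : ℝ) : ℂ)).re with hBdef
  set G : ℝ → ℝ := fun t => A t * Real.cos (Real.pi * t / 2) - B t * Real.sin (Real.pi * t / 2)
    with hG
  have key : ∀ t : ℝ, 0 ≤ t →
      (hurwitzZeta (a : UnitAddCircle) ((-2 * M - t : ℝ) : ℂ) = 0 ↔ G t = 0) := by
    intro t ht
    have h := aux_zero_iff a (s := 2 * M + 1 + t) (by linarith)
    rw [show (1 - (2 * M + 1 + t) : ℝ) = -2 * M - t by ring] at h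
    rw [h, show Real.pi * (2 * M + 1 + t) / 2 = (Real.pi * t / 2 + Real.pi / 2) + M * Real.pi by ring,
      Real.cos_add_int_mul_pi, Real.sin_add_int_mul_pi, Real.cos_add_pi_div_two,
      Real.sin_add_pi_div_two]
    have hne : ((-1 : ℝ) ^ M) ≠ 0 := zpow_ne_zero _ (by norm_num)
    rw [show ((-1 : ℝ) ^ M * -Real.sin (Real.pi * t / 2)) *
        (cosZeta (a : UnitAddCircle) ((2 * M + 1 + t : ℝ) : ℂ)).re +
        ((-1 : ℝ) ^ M * Real.cos (Real.pi * t / 2)) *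
        (sinZeta (a : UnitAddCircle) ((2 * M + 1 + t : ℝ) : ℂ)).re = (-1 : ℝ) ^ M * G t by
        simp only [hG, hAdef, hBdef]; ring, mul_eq_zero, or_iff_right hne]
  suffices H : ∃! t : ℝ, t ∈ Set.Ioc (0 : ℝ) 2 ∧ G t = 0 by
    obtain ⟨t, ⟨⟨ht0, ht2⟩, ht⟩, hu⟩ := H
    refine ⟨-2 * M - t, ⟨⟨by linarith, by linarith⟩, (key t ht0.le).2 ht⟩, ?_⟩
    rintro σ ⟨⟨h1, h2⟩, h3⟩
    have h4 := hu (-2 * M - σ) ⟨⟨by linarith, by linarith⟩, (key _ (by linarith)).1 (by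
      rw [show (-2 * M - (-2 * M - σ) : ℝ) = σ by ring]; exact h3)⟩
    linarith
  set s := Real.sin (2 * Real.pi * a) with hs
  set c := Real.cos (2 * Real.pi * a) with hc
  have hcs : s ^ 2 + c ^ 2 = 1 := Real.sin_sq_add_cos_sq _
  have nA : ∀ t, 0 ≤ t → |A t - s| ≤ |s| / 10 := fun t ht => aux_sin_near a (by linarith)
  have nB : ∀ t, 0 ≤ t → |B t - c| ≤ 1 / 10 := fun t ht => aux_cos_near a (by linarith)
  have e2 : Real.pi * 2 / 2 = Real.pi := by ring
  by_cases h0 : s = 0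
  · have zA : ∀ t, 0 ≤ t → A t = 0 := by
      intro t ht
      have := nA t ht
      rw [h0] at this
      simpa using this
    refine ⟨2, ⟨⟨by norm_num, le_rfl⟩, ?_⟩, ?_⟩
    · simp only [hG]
      rw [zA 2 (by norm_num), e2]
      simp
    · rintro t ⟨⟨ht0, ht2⟩, ht⟩
      by_contra hne
      have hlt : t < 2 := lt_of_le_of_ne ht2 hne
      have hsin : 0 < Real.sin (Real.pi * t / 2) :=
        Real.sin_pos_of_pos_of_lt_pi (by positivity) (by nlinarith)
      simp only [hG] at ht
      rw [zA t ht0.le] at ht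
      have hB0 : B t = 0 := by
        have : B t * Real.sin (Real.pi * t / 2) = 0 := by linarith
        exact (mul_eq_zero.1 this).resolve_right hsin.ne'
      have := nB t ht0.le
      rw [hB0] at this
      have := abs_le.1 this
      rw [h0] at hcs
      nlinarith
  · have hsA : ∀ t, 0 ≤ t → 0 < A t * s := by
      intro t ht
      have h' : |(A t - s) * s| ≤ |s| / 10 * |s| := by
        rw [abs_mul]
        have := nA t ht
        gcongr
      have := (abs_le.1 h').1
      have h2 : |s| ^ 2 = s ^ 2 := sq_abs s
      have : 0 < s ^ 2 := by positivity
      nlinarith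
    have G0 : G 0 = A 0 := by simp [hG]
    have G2 : G 2 = -A 2 := by simp only [hG]; rw [e2]; simp
    have hcont : ContinuousOn (fun t => G t * s) (Set.Icc 0 2) := by
      have hcast : Continuous (fun t : ℝ => ((2 * M + 1 + t : ℝ) : ℂ)) := by fun_prop
      have hA : ContinuousOn A (Set.Icc 0 2) := by
        intro t ht
        apply ContinuousAt.continuousWithinAt
        have := (differentiableAt_sinZeta (a : UnitAddCircle)).continuous
        exact (Complex.continuous_re.comp (this.comp hcast)).continuousAt
      have hB : ContinuousOn B (Set.Icc 0 2) := by
        intro t ht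
        apply ContinuousAt.continuousWithinAt
        have h1 : ((2 * M + 1 + t : ℝ) : ℂ) ≠ 1 := by
          intro h
          have h' : 2 * M + 1 + t = 1 := by exact_mod_cast h
          have := ht.1
          linarith
        have h2 := (differentiableAt_cosZeta (a : UnitAddCircle) (Or.inl h1)).continuousAt
        exact Complex.continuous_re.continuousAt.comp
          (ContinuousAt.comp (f := fun t : ℝ => ((2 * M + 1 + t : ℝ) : ℂ)) h2 hcast.continuousAt)
      simp only [hG]
      fun_prop
    have hivt := intermediate_value_Icc' (by norm_num : (0 : ℝ) ≤ 2) hcont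
    have p0 := hsA 0 le_rfl
    have p2 := hsA 2 (by norm_num)
    obtain ⟨t, ⟨ht0, ht2⟩, ht⟩ := hivt (show (0 : ℝ) ∈ _ from
      ⟨by simp only [G2]; linarith, by simp only [G0]; linarith⟩)
    have ht : G t = 0 := (mul_eq_zero.1 ht).resolve_right h0
    have n0 : G 0 ≠ 0 := by rw [G0]; intro h; rw [h] at p0; simp at p0
    have n2 : G 2 ≠ 0 := by
      rw [G2]; intro h; rw [neg_eq_zero.1 h] at p2; simp at p2
    have uniq : ∀ x y : ℝ, 0 < x → y < 2 → G x = 0 → G y = 0 → ¬ x < y := by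
      intro x y hx hy gx gy hxy
      refine aux_core hcs h0 (nA x hx.le) (nA y (by linarith)) (nB x hx.le) (nB y (by linarith))
        ?_ ?_ hx hxy hy gx gy
      · have := aux_sin_lip a (s := 2 * M + 1 + x) (t := 2 * M + 1 + y) (by linarith) (by linarith)
        rwa [show 2 * (M : ℝ) + 1 + y - (2 * M + 1 + x) = y - x by ring] at this
      · have := aux_cos_lip a (s := 2 * M + 1 + x) (t := 2 * M + 1 + y) (by linarith) (by linarith)
        rwa [show 2 * (M : ℝ) + 1 + y - (2 * M + 1 + x) = y - x by ring] at this
    have ht0' : 0 < t := lt_of_le_of_ne ht0 (by rintro rfl; exact n0 ht)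
    have ht2' : t < 2 := lt_of_le_of_ne ht2 (by rintro rfl; exact n2 ht)
    refine ⟨t, ⟨⟨ht0', ht2⟩, ht⟩, ?_⟩
    rintro y ⟨⟨hy0, hy2⟩, hy⟩
    have hy2' : y < 2 := lt_of_le_of_ne hy2 (by rintro rfl; exact n2 hy)
    exact le_antisymm (not_lt.1 (uniq t y ht0' hy2' ht hy)) (not_lt.1 (uniq y t hy0 ht2' hy ht))
end
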